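/- Pricing–hedging duality with traded puts for bounded claims: Suppose the market input (X_p, 𝒫, 𝔓) admits no weak free lunch with vanishing risk, and let μ₁,…,μ_n be the measures defined by μ_i([0, K]) = p_i′(K). Let G : ℝ₊^n → [−∞, ∞) be an upper semi-continuous function bounded from above. Then sup_{ℙ ∈ M⁻_{μ,𝔓}} E_ℙ[G] = sup{E_ℙ[G(S)] : ℙ a market calibrated model} = inf{𝒫(X) : there exists an admissible put-based strategy (X, Δ) with Ψ_{X,Δ} ≥ G on 𝔓} = V^{(p)}_{μ,𝔓}(G). -/

import Mathlib

open MeasureTheory Set Filter Topology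
open scoped ENNReal NNReal Classical

noncomputable section

namespace RobustFin

/-- Canonical path space: the values `S₀, S₁, …, S_n` of the asset. -/
abbrev Path (n : ℕ) := Fin (n + 1) → ℝ

/-- Paths starting at `s₀` with nonnegative coordinates: the canonical space `Ω`. -/
def Omega (n : ℕ) (s₀ : ℝ) : Set (Path n) := {ω | ω 0 = s₀ ∧ ∀ i, 0 ≤ ω i}

/-- The first `j` coordinates `S₁, …, S_j` of a path. -/
def restr {n : ℕ} (j : Fin n) (ω : Path n) : Fin j → ℝ :=
  fun i => ω ⟨(i : ℕ) + 1, by have h1 := i.isLt; have h2 := j.isLt; omega⟩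

/-- The coordinates `S₁, …, S_n` of a path. -/
def tailCoords {n : ℕ} (ω : Path n) : Fin n → ℝ := fun i => ω i.succ

/-- A dynamic trading strategy: bounded measurable positions `Δ_j(S₁,…,S_j)`. -/
structure Dyn (n : ℕ) where
  pos : (j : Fin n) → (Fin j → ℝ) → ℝ
  meas : ∀ j, Measurable (pos j)
  bdd : ∀ j, ∃ C, ∀ x, |pos j x| ≤ C

/-- No short selling: all dynamic positions are nonnegative. -/
def Dyn.Nonneg {n : ℕ} (D : Dyn n) : Prop := ∀ j x, 0 ≤ D.pos j x

/-- Gains from dynamic trading: `Σ_j Δ_j(S₁,…,S_j)(S_{j+1} − S_j)`. -/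
def Dyn.gains {n : ℕ} (D : Dyn n) (ω : Path n) : ℝ :=
  ∑ j : Fin n, D.pos j (restr j ω) * (ω j.succ - ω j.castSucc)

/-- A static option portfolio: a constant (cash) position plus a finite linear
combination of options with maturity indices `idx` and nonnegative strikes. -/
structure Static (n : ℕ) where
  const : ℝ
  m : ℕ
  coeff : Fin m → ℝ
  idx : Fin m → Fin n
  strike : Fin m → ℝ
  strike_nonneg : ∀ k, 0 ≤ strike k

/-- Payoff of the portfolio when the options are call options. -/
def Static.callPayoff {n : ℕ} (X : Static n) (ω : Path n) : ℝ :=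
  X.const + ∑ k, X.coeff k * max (ω (X.idx k).succ - X.strike k) 0

/-- Payoff of the portfolio when the options are put options. -/
def Static.putPayoff {n : ℕ} (X : Static n) (ω : Path n) : ℝ :=
  X.const + ∑ k, X.coeff k * max (X.strike k - ω (X.idx k).succ) 0

/-- Price of a static portfolio, given the unit option prices `c i K`;
this is the (unique) linear pricing functional determined by the prices. -/
def Static.price {n : ℕ} (X : Static n) (c : Fin n → ℝ → ℝ) : ℝ :=
  X.const + ∑ k, X.coeff k * c (X.idx k) (X.strike k)

/-- Expectation of a real payoff, valued in `EReal`, with the convention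
`∞ − ∞ = −∞` (in `EReal`, `⊤ - ⊤ = ⊥`). -/
def eexp {n : ℕ} (P : Measure (Path n)) (f : Path n → ℝ) : EReal :=
  ((∫⁻ ω, ENNReal.ofReal (f ω) ∂P : ℝ≥0∞) : EReal) -
    ((∫⁻ ω, ENNReal.ofReal (-(f ω)) ∂P : ℝ≥0∞) : EReal)

/-- The positive part of an extended real number, in `ℝ≥0∞`. -/
def posE (x : EReal) : ℝ≥0∞ := if x = ⊤ then ⊤ else ENNReal.ofReal x.toReal

/-- Expectation of an `EReal`-valued payoff, with the convention `∞ − ∞ = −∞`. -/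
def eexpE {n : ℕ} (P : Measure (Path n)) (f : Path n → EReal) : EReal :=
  ((∫⁻ ω, posE (f ω) ∂P : ℝ≥0∞) : EReal) - ((∫⁻ ω, posE (-(f ω)) ∂P : ℝ≥0∞) : EReal)

/-- A market calibrated model for the market with static payoffs `pay` (calls or puts),
prices `c` and prediction set `P`. -/
def Calibrated {n : ℕ} (pay : Static n → Path n → ℝ) (c : Fin n → ℝ → ℝ)
    (P : Set (Path n)) (Q : Measure (Path n)) : Prop :=
  IsProbabilityMeasure Q ∧ Q P = 1 ∧
    ∀ (X : Static n) (D : Dyn n), D.Nonneg →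
      eexp Q (fun ω => pay X ω + D.gains ω) ≤ (X.price c : EReal)

/-- A weak free lunch with vanishing risk. -/
def WFLVR {n : ℕ} (pay : Static n → Path n → ℝ) (c : Fin n → ℝ → ℝ)
    (P : Set (Path n)) : Prop :=
  ∃ (Xs : ℕ → Static n) (Ds : ℕ → Dyn n) (X : Static n) (D : Dyn n) (L : ℝ),
    (∀ k, (Ds k).Nonneg) ∧ D.Nonneg ∧
    (∀ ω ∈ P, Tendsto (fun k => pay (Xs k) ω + (Ds k).gains ω) atTop (nhds 0)) ∧
    (∀ k, ∀ ω ∈ P, pay X ω + D.gains ω ≤ pay (Xs k) ω + (Ds k).gains ω) ∧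
    Tendsto (fun k => (Xs k).price c) atTop (nhds L) ∧ L < 0

/-- A robust uniformly strong arbitrage. -/
def RobustArbitrage {n : ℕ} (pay : Static n → Path n → ℝ) (c : Fin n → ℝ → ℝ)
    (P : Set (Path n)) : Prop :=
  ∃ (X : Static n) (D : Dyn n), D.Nonneg ∧ X.price c < 0 ∧
    ∀ ω ∈ P, 0 ≤ pay X ω + D.gains ω

/-- The superhedging price of `G` over semi-static strategies (no short selling). -/
def V {n : ℕ} (pay : Static n → Path n → ℝ) (c : Fin n → ℝ → ℝ)
    (P : Set (Path n)) (G : Path n → EReal) : EReal :=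
  sInf {q : EReal | ∃ (X : Static n) (D : Dyn n), D.Nonneg ∧ q = (X.price c : EReal) ∧
    ∀ ω ∈ P, G ω ≤ ((pay X ω + D.gains ω : ℝ) : EReal)}

/-- The superhedging price of `G` when the dynamic positions may take both signs. -/
def Vsigned {n : ℕ} (pay : Static n → Path n → ℝ) (c : Fin n → ℝ → ℝ)
    (P : Set (Path n)) (G : Path n → EReal) : EReal :=
  sInf {q : EReal | ∃ (X : Static n) (D : Dyn n), q = (X.price c : EReal) ∧
    ∀ ω ∈ P, G ω ≤ ((pay X ω + D.gains ω : ℝ) : EReal)}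

/-- `Π_μ`: probability measures on the path space with marginals `δ_{s₀}, μ₁, …, μ_n`. -/
def PiMu {n : ℕ} (s₀ : ℝ) (μ : Fin n → Measure ℝ) : Set (Measure (Path n)) :=
  {π | IsProbabilityMeasure π ∧ π (Omega n s₀) = 1 ∧
       ∀ i : Fin n, π.map (fun ω => ω i.succ) = μ i}

/-- The coordinate process is a supermartingale in its natural filtration:
for every Borel `A ⊆ ℝ₊^j`, `∫ 1_A(S₁,…,S_j)(S_{j+1} − S_j) dπ ≤ 0`. -/
def IsSupermartingaleLaw {n : ℕ} (π : Measure (Path n)) : Prop :=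
  ∀ (j : Fin n) (A : Set (Fin j → ℝ)), MeasurableSet A →
    ∫ ω, Set.indicator A (fun _ => (1 : ℝ)) (restr j ω) * (ω j.succ - ω j.castSucc) ∂π ≤ 0

/-- `M⁻_μ`: calibrated supermartingale measures. -/
def MSet {n : ℕ} (s₀ : ℝ) (μ : Fin n → Measure ℝ) : Set (Measure (Path n)) :=
  {π ∈ PiMu s₀ μ | IsSupermartingaleLaw π}

/-- `M⁻_{μ,𝔓}`: calibrated supermartingale measures giving full mass to `P`. -/
def MSetP {n : ℕ} (s₀ : ℝ) (μ : Fin n → Measure ℝ) (P : Set (Path n)) :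
    Set (Measure (Path n)) :=
  {π ∈ MSet s₀ μ | π P = 1}

/-- Assumption A on the marginals. -/
def AssumptionA {n : ℕ} (s₀ : ℝ) (μ : Fin n → Measure ℝ) : Prop :=
  (∀ i, ∫ x, x ∂(μ i) ≤ s₀) ∧
  (∀ i j : Fin n, i ≤ j → ∫ x, x ∂(μ j) ≤ ∫ x, x ∂(μ i)) ∧
  (∀ φ : ℝ → ℝ, ConcaveOn ℝ Set.univ φ → Monotone φ → (∀ x, 0 ≤ φ x) →
    ∀ i j : Fin n, i ≤ j → ∫ x, φ x ∂(μ j) ≤ ∫ x, φ x ∂(μ i))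

/-- Condition C (i): each `c_i` is nonnegative, convex and nonincreasing on `ℝ₊`. -/
def CondC1 {n : ℕ} (c : Fin n → ℝ → ℝ) : Prop :=
  ∀ i, (∀ x, 0 ≤ x → 0 ≤ c i x) ∧ ConvexOn ℝ (Set.Ici 0) (c i) ∧ AntitoneOn (c i) (Set.Ici 0)

/-- Condition C (ii): `s₀ ≥ c₁(0) ≥ … ≥ c_n(0) ≥ 0` and `c_i'(0+) ≥ −1`
(the latter expressed, for convex `c_i`, through the slopes at `0`). -/
def CondC2 {n : ℕ} (s₀ : ℝ) (c : Fin n → ℝ → ℝ) : Prop :=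
  (∀ i, c i 0 ≤ s₀) ∧ (∀ i j : Fin n, i ≤ j → c j 0 ≤ c i 0) ∧ (∀ i, 0 ≤ c i 0) ∧
    (∀ i, ∀ K : ℝ, 0 < K → c i 0 - K ≤ c i K)

/-- Condition C (iii): `c_i(K) → 0` as `K → ∞`. -/
def CondC3 {n : ℕ} (c : Fin n → ℝ → ℝ) : Prop :=
  ∀ i, Tendsto (c i) atTop (nhds 0)

/-- Condition C (iv): for every `x ≥ 0`, `c_i(0) − c_i(x)` is nonincreasing in `i`. -/
def CondC4 {n : ℕ} (c : Fin n → ℝ → ℝ) : Prop :=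
  ∀ x : ℝ, 0 ≤ x → ∀ i j : Fin n, i ≤ j → c j 0 - c j x ≤ c i 0 - c i x

/-- Condition C. -/
def CondC {n : ℕ} (s₀ : ℝ) (c : Fin n → ℝ → ℝ) : Prop :=
  CondC1 c ∧ CondC2 s₀ c ∧ CondC3 c ∧ CondC4 c

/-- Condition P (i). -/
def CondP1 {n : ℕ} (p : Fin n → ℝ → ℝ) : Prop :=
  ∀ i, (∀ x, 0 ≤ x → 0 ≤ p i x) ∧ ConvexOn ℝ (Set.Ici 0) (p i) ∧ MonotoneOn (p i) (Set.Ici 0)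

/-- Condition P (ii): `s₀ ≥ lim (x − p₁(x)) ≥ … ≥ 0` and `0 ≤ p_i'(0+) ≤ 1`. -/
def CondP2 {n : ℕ} (s₀ : ℝ) (p : Fin n → ℝ → ℝ) : Prop :=
  (∃ L : Fin n → ℝ,
    (∀ i, Tendsto (fun x => x - p i x) atTop (nhds (L i))) ∧
    (∀ i, L i ≤ s₀) ∧ (∀ i j : Fin n, i ≤ j → L j ≤ L i) ∧ (∀ i, 0 ≤ L i)) ∧
  (∃ d : Fin n → ℝ,
    (∀ i, Tendsto (fun K => (p i K - p i 0) / K) (nhdsWithin 0 (Set.Ioi 0)) (nhds (d i))) ∧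
    (∀ i, 0 ≤ d i ∧ d i ≤ 1))

/-- Condition P (iii): `p_i(K) → 0` as `K → 0` (within `ℝ₊`). -/
def CondP3 {n : ℕ} (p : Fin n → ℝ → ℝ) : Prop :=
  ∀ i, Tendsto (p i) (nhdsWithin 0 (Set.Ici 0)) (nhds 0)

/-- Condition P (iv): `p_i(x)` is nondecreasing in `i`. -/
def CondP4 {n : ℕ} (p : Fin n → ℝ → ℝ) : Prop :=
  ∀ x : ℝ, 0 ≤ x → ∀ i j : Fin n, i ≤ j → p i x ≤ p j x

/-- Condition P. -/
def CondP {n : ℕ} (s₀ : ℝ) (p : Fin n → ℝ → ℝ) : Prop :=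
  CondP1 p ∧ CondP2 s₀ p ∧ CondP3 p ∧ CondP4 p

/-- The measures `μ_i` defined from the put prices by `μ_i([0,K]) = p_i'(K)`;
equivalently, `p_i(K) = ∫ (K − x)⁺ μ_i(dx)`. -/
def PutPricesFrom {n : ℕ} (p : Fin n → ℝ → ℝ) (μ : Fin n → Measure ℝ) : Prop :=
  (∀ i, IsProbabilityMeasure (μ i)) ∧ (∀ i, μ i (Set.Iio 0) = 0) ∧
  (∀ i, Integrable (fun x => x) (μ i)) ∧
  (∀ i, ∀ K : ℝ, 0 ≤ K → p i K = ∫ x, max (K - x) 0 ∂(μ i))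

/-- The path `(s₀, s₁, …, s_i, x, s_{i+2}, …, s_n)`. -/
def mkPath {n : ℕ} (s₀ : ℝ) (i : Fin n) (s : Fin i → ℝ) (x : ℝ)
    (t : Fin (n - ((i : ℕ) + 1)) → ℝ) : Path n := fun j =>
  if h0 : (j : ℕ) = 0 then s₀
  else if h1 : (j : ℕ) ≤ (i : ℕ) then
    s ⟨(j : ℕ) - 1, by have := j.isLt; have := i.isLt; omega⟩
  else if h2 : (j : ℕ) = (i : ℕ) + 1 then x
  else t ⟨(j : ℕ) - (i : ℕ) - 2, by have := j.isLt; have := i.isLt; omega⟩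

/-- The family `β_i : ℝ₊^i → ℝ` defined recursively by `β_n = 0` and
`β_i(s₁,…,s_i) = (sup_{s_{i+2},…,s_n} limsup_{x→∞} ((β_{i+1}(s₁,…,s_i,x)
 + G(s₁,…,s_i,x,s_{i+2},…,s_n)/x)·1_𝔓)) ∨ 0`. -/
def IsBetaFamily {n : ℕ} (s₀ : ℝ) (P : Set (Path n)) (G : (Fin n → ℝ) → EReal)
    (β : (i : Fin (n + 1)) → (Fin i → ℝ) → ℝ) : Prop :=
  (∀ s, β (Fin.last n) s = 0) ∧
  ∀ (i : Fin n) (s : Fin i → ℝ), (∀ k, 0 ≤ s k) →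
    (β ⟨(i : ℕ), by have := i.isLt; omega⟩ s : EReal) =
      max 0 (⨆ (t : Fin (n - ((i : ℕ) + 1)) → ℝ) (_ : ∀ k, 0 ≤ t k),
        Filter.limsup (fun x : ℝ =>
          if mkPath s₀ i s x t ∈ P then
            ((β ⟨(i : ℕ) + 1, by have := i.isLt; omega⟩ (Fin.snoc s x) : ℝ) : EReal)
              + G (tailCoords (mkPath s₀ i s x t)) * ((x⁻¹ : ℝ) : EReal)
          else 0) Filter.atTop)

/-- Gains of the dynamic strategy `(β_i)`: `β₀(S₁ − s₀) + Σ_i β_i(S₁,…,S_i)(S_{i+1} − S_i)`. -/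
def gainsOf {n : ℕ} (β : (i : Fin (n + 1)) → (Fin i → ℝ) → ℝ) (ω : Path n) : ℝ :=
  ∑ j : Fin n, β ⟨(j : ℕ), by have := j.isLt; omega⟩ (restr j ω) * (ω j.succ - ω j.castSucc)

/-- The penalty function `λ_𝔓(s₁,…,s_n) = (1 + s₁ + … + s_n)·1{(s₁,…,s_n) ∉ 𝔓}`. -/
def lambdaP {n : ℕ} (P : Set (Path n)) (ω : Path n) : ℝ :=
  if ω ∈ P then 0 else 1 + ∑ i : Fin n, ω i.succ

/-- `min(s₀, s₁, …, s_m)`. -/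
def pmin {m : ℕ} (s₀ : ℝ) (s : Fin m → ℝ) : ℝ :=
  Finset.univ.inf' Finset.univ_nonempty
    (fun j : Fin (m + 1) =>
      if h : (j : ℕ) = 0 then s₀ else s ⟨(j : ℕ) - 1, by have := j.isLt; omega⟩)

/-- `max(s₀, s₁, …, s_m)`. -/
def pmax {m : ℕ} (s₀ : ℝ) (s : Fin m → ℝ) : ℝ :=
  Finset.univ.sup' Finset.univ_nonempty
    (fun j : Fin (m + 1) =>
      if h : (j : ℕ) = 0 then s₀ else s ⟨(j : ℕ) - 1, by have := j.isLt; omega⟩)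


open scoped BoundedContinuousFunction CompactlySupported

/-! ### Hedging cone -/

def Static.add {n : ℕ} (X Y : Static n) : Static n where
  const := X.const + Y.const
  m := X.m + Y.m
  coeff := Fin.append X.coeff Y.coeff
  idx := Fin.append X.idx Y.idx
  strike := Fin.append X.strike Y.strike
  strike_nonneg := by
    intro k
    refine Fin.addCases (fun i => ?_) (fun i => ?_) k
    · simpa using X.strike_nonneg i
    · simpa using Y.strike_nonneg i

lemma Static.add_putPayoff {n : ℕ} (X Y : Static n) (ω : Path n) :
    (X.add Y).putPayoff ω = X.putPayoff ω + Y.putPayoff ω := by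
  have : (X.add Y).putPayoff ω = X.const + Y.const + ∑ k : Fin (X.m + Y.m),
      Fin.append X.coeff Y.coeff k *
        max (Fin.append X.strike Y.strike k - ω (Fin.append X.idx Y.idx k).succ) 0 := rfl
  rw [this, Fin.sum_univ_add]
  simp only [Static.putPayoff, Fin.append_left, Fin.append_right]
  ring

lemma Static.add_price {n : ℕ} (X Y : Static n) (c : Fin n → ℝ → ℝ) :
    (X.add Y).price c = X.price c + Y.price c := by
  have : (X.add Y).price c = X.const + Y.const + ∑ k : Fin (X.m + Y.m),
      Fin.append X.coeff Y.coeff k *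
        c (Fin.append X.idx Y.idx k) (Fin.append X.strike Y.strike k) := rfl
  rw [this, Fin.sum_univ_add]
  simp only [Static.price, Fin.append_left, Fin.append_right]
  ring

def Static.smul {n : ℕ} (a b : ℝ) (X : Static n) : Static n where
  const := a * X.const + b
  m := X.m
  coeff := fun k => a * X.coeff k
  idx := X.idx
  strike := X.strike
  strike_nonneg := X.strike_nonneg

lemma Static.smul_putPayoff {n : ℕ} (a b : ℝ) (X : Static n) (ω : Path n) :
    (X.smul a b).putPayoff ω = a * X.putPayoff ω + b := by
  have : (X.smul a b).putPayoff ω = a * X.const + b + ∑ k : Fin X.m,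
      a * X.coeff k * max (X.strike k - ω (X.idx k).succ) 0 := rfl
  rw [this]
  simp only [Static.putPayoff, mul_add, Finset.mul_sum, mul_assoc]
  ring

lemma Static.smul_price {n : ℕ} (a b : ℝ) (X : Static n) (c : Fin n → ℝ → ℝ) :
    (X.smul a b).price c = a * X.price c + b := by
  have : (X.smul a b).price c = a * X.const + b + ∑ k : Fin X.m,
      a * X.coeff k * c (X.idx k) (X.strike k) := rfl
  rw [this]
  simp only [Static.price, mul_add, Finset.mul_sum, mul_assoc]
  ring

/-- One put option. -/
def Static.single {n : ℕ} (i : Fin n) (K : ℝ) (hK : 0 ≤ K) : Static n where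
  const := 0
  m := 1
  coeff := fun _ => 1
  idx := fun _ => i
  strike := fun _ => K
  strike_nonneg := fun _ => hK

lemma Static.single_putPayoff {n : ℕ} (i : Fin n) (K : ℝ) (hK : 0 ≤ K) (ω : Path n) :
    (Static.single i K hK).putPayoff ω = max (K - ω i.succ) 0 := by
  have : (Static.single i K hK).putPayoff ω = 0 + ∑ _k : Fin 1,
      (1 : ℝ) * max (K - ω i.succ) 0 := rfl
  rw [this]; simp

lemma Static.single_price {n : ℕ} (i : Fin n) (K : ℝ) (hK : 0 ≤ K) (c : Fin n → ℝ → ℝ) :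
    (Static.single i K hK).price c = c i K := by
  have : (Static.single i K hK).price c = 0 + ∑ _k : Fin 1, (1 : ℝ) * c i K := rfl
  rw [this]; simp

def Static.cash {n : ℕ} (a : ℝ) : Static n where
  const := a
  m := 0
  coeff := fun _ => 1
  idx := fun k => k.elim0
  strike := fun _ => 0
  strike_nonneg := fun _ => le_rfl

lemma Static.cash_putPayoff {n : ℕ} (a : ℝ) (ω : Path n) :
    (Static.cash a : Static n).putPayoff ω = a := by
  have : (Static.cash a : Static n).putPayoff ω = a + ∑ k : Fin 0,
      (1 : ℝ) * max (0 - ω (k.elim0 : Fin n).succ) 0 := rfl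
  rw [this]; simp

lemma Static.cash_price {n : ℕ} (a : ℝ) (c : Fin n → ℝ → ℝ) :
    (Static.cash a : Static n).price c = a := by
  have : (Static.cash a : Static n).price c = a + ∑ k : Fin 0,
      (1 : ℝ) * c (k.elim0 : Fin n) 0 := rfl
  rw [this]; simp

def Dyn.lin {n : ℕ} (a b : ℝ) (D E : Dyn n) : Dyn n where
  pos := fun j x => a * D.pos j x + b * E.pos j x
  meas := fun j => ((D.meas j).const_mul a).add ((E.meas j).const_mul b)
  bdd := fun j => by
    obtain ⟨C, hC⟩ := D.bdd j
    obtain ⟨C', hC'⟩ := E.bdd j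
    refine ⟨|a| * C + |b| * C', fun x => ?_⟩
    refine (abs_add_le _ _).trans ?_
    rw [abs_mul, abs_mul]
    gcongr
    · exact hC x
    · exact hC' x

lemma Dyn.lin_gains {n : ℕ} (a b : ℝ) (D E : Dyn n) (ω : Path n) :
    (Dyn.lin a b D E).gains ω = a * D.gains ω + b * E.gains ω := by
  simp only [Dyn.gains, Dyn.lin, Finset.mul_sum, ← Finset.sum_add_distrib]
  refine Finset.sum_congr rfl fun j _ => ?_
  ring

lemma Dyn.lin_nonneg {n : ℕ} {a b : ℝ} (ha : 0 ≤ a) (hb : 0 ≤ b) {D E : Dyn n}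
    (hD : D.Nonneg) (hE : E.Nonneg) : (Dyn.lin a b D E).Nonneg := fun j x =>
  add_nonneg (mul_nonneg ha (hD j x)) (mul_nonneg hb (hE j x))

def Dyn.zero {n : ℕ} : Dyn n where
  pos := fun _ _ => 0
  meas := fun _ => measurable_const
  bdd := fun _ => ⟨0, by simp⟩

lemma Dyn.zero_gains {n : ℕ} (ω : Path n) : (Dyn.zero : Dyn n).gains ω = 0 := by
  simp [Dyn.gains, Dyn.zero]

lemma Dyn.zero_nonneg {n : ℕ} : (Dyn.zero : Dyn n).Nonneg := fun _ _ => le_rfl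

/-- A strategy trading only at date `j`. -/
def Dyn.single {n : ℕ} (j : Fin n) (Δ : (Fin j → ℝ) → ℝ) (hm : Measurable Δ)
    (hb : ∃ C, ∀ x, |Δ x| ≤ C) : Dyn n where
  pos := fun i => if h : i = j then fun x => Δ (h ▸ x) else 0
  meas := fun i => by
    by_cases h : i = j
    · subst h; simpa using hm
    · simp only [h, dite_false]; exact measurable_zero
  bdd := fun i => by
    by_cases h : i = j
    · subst h; simpa using hb
    · refine ⟨0, ?_⟩; simp [h]

lemma Dyn.single_gains {n : ℕ} (j : Fin n) (Δ : (Fin j → ℝ) → ℝ) (hm : Measurable Δ)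
    (hb : ∃ C, ∀ x, |Δ x| ≤ C) (ω : Path n) :
    (Dyn.single j Δ hm hb).gains ω = Δ (restr j ω) * (ω j.succ - ω j.castSucc) := by
  unfold Dyn.gains
  rw [Finset.sum_eq_single j]
  · simp [Dyn.single]
  · intro i _ h
    simp [Dyn.single, h]
  · simp

lemma Dyn.single_nonneg {n : ℕ} (j : Fin n) (Δ : (Fin j → ℝ) → ℝ) (hm : Measurable Δ)
    (hb : ∃ C, ∀ x, |Δ x| ≤ C) (h0 : ∀ x, 0 ≤ Δ x) : (Dyn.single j Δ hm hb).Nonneg := by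
  intro i x
  by_cases h : i = j
  · subst h; simpa [Dyn.single] using h0 x
  · simp [Dyn.single, h]

/-- `h` can be superhedged on `P` at price `q`. -/
def Hg {n : ℕ} (p : Fin n → ℝ → ℝ) (P : Set (Path n)) (q : ℝ) (h : Path n → ℝ) : Prop :=
  ∃ (X : Static n) (D : Dyn n), D.Nonneg ∧ X.price p = q ∧
    ∀ ω ∈ P, h ω ≤ X.putPayoff ω + D.gains ω

section
variable {n : ℕ} {p : Fin n → ℝ → ℝ} {P : Set (Path n)}

lemma Hg.mono {q : ℝ} {h k : Path n → ℝ} (H : Hg p P q h) (hk : ∀ ω ∈ P, k ω ≤ h ω) :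
    Hg p P q k := by
  obtain ⟨X, D, hD, hX, hh⟩ := H
  exact ⟨X, D, hD, hX, fun ω hω => (hk ω hω).trans (hh ω hω)⟩

lemma Hg.add {q r : ℝ} {h k : Path n → ℝ} (H : Hg p P q h) (K : Hg p P r k) :
    Hg p P (q + r) (fun ω => h ω + k ω) := by
  obtain ⟨X, D, hD, hX, hh⟩ := H
  obtain ⟨Y, E, hE, hY, hk⟩ := K
  refine ⟨X.add Y, Dyn.lin 1 1 D E, Dyn.lin_nonneg zero_le_one zero_le_one hD hE, ?_, ?_⟩
  · rw [Static.add_price, hX, hY]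
  · intro ω hω
    rw [Static.add_putPayoff, Dyn.lin_gains]
    linarith [hh ω hω, hk ω hω]

lemma Hg.affine {q : ℝ} {h : Path n → ℝ} (H : Hg p P q h) {a : ℝ} (ha : 0 ≤ a) (b : ℝ) :
    Hg p P (a * q + b) (fun ω => a * h ω + b) := by
  obtain ⟨X, D, hD, hX, hh⟩ := H
  refine ⟨X.smul a b, Dyn.lin a 0 D D, Dyn.lin_nonneg ha le_rfl hD hD, ?_, ?_⟩
  · rw [Static.smul_price, hX]
  · intro ω hω
    rw [Static.smul_putPayoff, Dyn.lin_gains]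
    linarith [mul_le_mul_of_nonneg_left (hh ω hω) ha]

lemma Hg.zero : Hg p P 0 (fun _ => 0) :=
  ⟨Static.cash 0, Dyn.zero, Dyn.zero_nonneg, Static.cash_price _ _, fun ω _ => by
    simp [Static.cash_putPayoff, Dyn.zero_gains]⟩

lemma Hg.V_le {q : ℝ} {h : Path n → ℝ} (H : Hg p P q h) {G : Path n → EReal}
    (hG : ∀ ω ∈ P, G ω ≤ (h ω : EReal)) : V Static.putPayoff p P G ≤ (q : EReal) := by
  obtain ⟨X, D, hD, hX, hh⟩ := H
  refine sInf_le ⟨X, D, hD, by rw [hX], fun ω hω => (hG ω hω).trans ?_⟩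
  exact_mod_cast hh ω hω

/-- The cone used in the Riesz extension argument. -/
def hedgeCone (p : Fin n → ℝ → ℝ) (P : Set (Path n)) (c : ℝ) (g : ℕ → (Path n →ᵇ ℝ))
    (hg : Antitone g) : PointedCone ℝ (Path n →ᵇ ℝ) where
  carrier := {f | ∃ (l : ℝ) (m : ℕ), 0 ≤ l ∧ Hg p P 0 (fun ω => - f ω - l * (c - g m ω))}
  zero_mem' := ⟨0, 0, le_rfl, by simpa using Hg.zero⟩
  add_mem' := by
    rintro f f' ⟨l, m, hl, H⟩ ⟨l', m', hl', H'⟩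
    refine ⟨l + l', max m m', add_nonneg hl hl', ?_⟩
    have := H.add H'
    rw [add_zero] at this
    refine this.mono fun ω _ => ?_
    have h1 : g (max m m') ω ≤ g m ω := hg (le_max_left m m') ω
    have h2 : g (max m m') ω ≤ g m' ω := hg (le_max_right m m') ω
    have h3 := mul_le_mul_of_nonneg_left h1 hl
    have h4 := mul_le_mul_of_nonneg_left h2 hl'
    simp only [BoundedContinuousFunction.coe_add, Pi.add_apply]
    linarith
  smul_mem' := by
    rintro a f ⟨l, m, hl, H⟩
    refine ⟨a * l, m, mul_nonneg a.2 hl, ?_⟩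
    have := H.affine a.2 0
    simp only [mul_zero, add_zero] at this
    refine this.mono fun ω _ => ?_
    have : (a • f) ω = (a : ℝ) * f ω := rfl
    rw [this]
    exact le_of_eq (by ring)

theorem exists_functional (c : ℝ) (g : ℕ → (Path n →ᵇ ℝ)) (hg : Antitone g)
    (G : Path n → EReal) (hGg : ∀ m, ∀ ω ∈ P, G ω ≤ (g m ω : EReal))
    (hc : (c : EReal) ≤ V Static.putPayoff p P G) :
    ∃ L : (Path n →ᵇ ℝ) →ₗ[ℝ] ℝ, L 1 = 1 ∧ (∀ m, c ≤ L (g m)) ∧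
      ∀ f : Path n →ᵇ ℝ, Hg p P 0 (fun ω => - f ω) → 0 ≤ L f := by
  have hone : (1 : Path n →ᵇ ℝ) ≠ 0 := by
    intro h
    have := congrArg (fun f : Path n →ᵇ ℝ => f 0) h
    simp at this
  suffices hh : ∃ L : (Path n →ᵇ ℝ) →ₗ[ℝ] ℝ,
      (∀ x : (LinearPMap.mkSpanSingleton (σ := RingHom.id ℝ)
        (1 : Path n →ᵇ ℝ) (1 : ℝ) hone).domain, L x =
        (LinearPMap.mkSpanSingleton (σ := RingHom.id ℝ) (1 : Path n →ᵇ ℝ) (1 : ℝ) hone) x) ∧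
      ∀ x ∈ hedgeCone p P c g hg, 0 ≤ L x by
    obtain ⟨L, hL1, hL2⟩ := hh
    refine ⟨L, ?_, ?_, ?_⟩
    · have := hL1 ⟨1, Submodule.mem_span_singleton_self _⟩
      rw [this]
      exact LinearPMap.mkSpanSingleton_apply ℝ ℝ hone (1 : ℝ)
    · intro m
      have := hL2 (g m - c • 1) ⟨1, m, zero_le_one, Hg.zero.mono fun ω _ => by simp⟩
      rw [map_sub, map_smul] at this
      have h1 : L 1 = 1 := by
        have := hL1 ⟨1, Submodule.mem_span_singleton_self _⟩
        rw [this]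
        exact LinearPMap.mkSpanSingleton_apply ℝ ℝ hone (1 : ℝ)
      rw [h1] at this
      simpa using this
    · intro f hf
      exact hL2 f ⟨0, 0, le_rfl, by simpa using hf⟩
  apply riesz_extension
  · rintro ⟨x, hx⟩ hxs
    obtain ⟨a, rfl⟩ := Submodule.mem_span_singleton.1 hx
    rw [LinearPMap.mkSpanSingleton'_apply]
    simp only [smul_eq_mul, mul_one]
    obtain ⟨l, m, hl, H⟩ := hxs
    by_contra! ha
    replace ha : a < 0 := ha
    simp only [BoundedContinuousFunction.coe_smul, BoundedContinuousFunction.coe_one,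
      Pi.one_apply, smul_eq_mul, mul_one] at H
    rcases hl.eq_or_lt with rfl | hl
    · have hB : ∀ ω, g 0 ω ≤ ‖g 0‖ := fun ω => (le_abs_self _).trans ((g 0).norm_coe_le_norm ω)
      set B := ‖g 0‖
      set t := max 0 ((B - c + 1) / (-a))
      have h1 := H.affine (a := t) (le_max_left _ _) (B + t * a)
      have h2 := h1.V_le (G := G) fun ω hω => (hGg 0 ω hω).trans (by
        have : g 0 ω ≤ t * (-a - 0 * (c - g m ω)) + (B + t * a) := by linarith [hB ω]
        exact_mod_cast this)
      have h3 := hc.trans h2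
      have h4 : c ≤ t * 0 + (B + t * a) := by exact_mod_cast h3
      have h5 : (B - c + 1) / (-a) ≤ t := le_max_right _ _
      rw [div_le_iff₀ (by linarith)] at h5
      linarith
    · have h1 := H.affine (a := 1 / l) (by positivity) (c + a / l)
      have h2 := h1.V_le (G := G) fun ω hω => (hGg m ω hω).trans (by
        have : g m ω = 1 / l * (-a - l * (c - g m ω)) + (c + a / l) := by field_simp; ring
        exact_mod_cast this.le)
      have h3 := hc.trans h2
      have h4 : c ≤ 1 / l * 0 + (c + a / l) := by exact_mod_cast h3
      have h5 : a / l < 0 := div_neg_of_neg_of_pos ha hl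
      linarith
  · intro y
    refine ⟨⟨‖y‖ • 1, Submodule.smul_mem _ _ (Submodule.mem_span_singleton_self _)⟩,
      0, 0, le_rfl, Hg.zero.mono fun ω _ => ?_⟩
    have := (neg_le_abs (y ω)).trans (y.norm_coe_le_norm ω)
    simp
    linarith

end


/-! ### Representation of tight positive functionals -/

theorem exists_measure {X : Type*} [TopologicalSpace X] [T2Space X] [LocallyCompactSpace X]
    [MeasurableSpace X] [BorelSpace X]
    (L : (X →ᵇ ℝ) →ₗ[ℝ] ℝ) (hpos : ∀ f : X →ᵇ ℝ, (∀ x, 0 ≤ f x) → 0 ≤ L f) (h1 : L 1 = 1)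
    (χ : ℕ → (X →ᵇ ℝ)) (hχc : ∀ k, HasCompactSupport (χ k)) (hχ0 : ∀ k x, 0 ≤ χ k x)
    (hχ1 : ∀ k x, χ k x ≤ 1) (hχlim : ∀ x, Tendsto (fun k => χ k x) atTop (𝓝 1))
    (hL : Tendsto (fun k => L (χ k)) atTop (𝓝 1)) :
    ∃ Q : Measure X, IsProbabilityMeasure Q ∧ ∀ f : X →ᵇ ℝ, ∫ x, f x ∂Q = L f := by
  have hmono : ∀ f g : X →ᵇ ℝ, (∀ x, f x ≤ g x) → L f ≤ L g := by
    intro f g hfg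
    have := hpos (g - f) fun x => by simpa using hfg x
    rw [map_sub] at this
    linarith
  let Λ₀ : C_c(X, ℝ) →ₗ[ℝ] ℝ :=
    { toFun := fun f => L f.toBoundedContinuousFunction
      map_add' := fun f g => by
        rw [← map_add]; rfl
      map_smul' := fun a f => by
        rw [RingHom.id_apply, ← map_smul]; rfl }
  let Λ : C_c(X, ℝ) →ₚ[ℝ] ℝ := PositiveLinearMap.mk₀ Λ₀ (fun f hf => hpos _ fun x => hf x)
  let Q := RealRMK.rieszMeasure Λ
  have hrep : ∀ (f : X →ᵇ ℝ), HasCompactSupport f → ∫ x, f x ∂Q = L f := by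
    intro f hf
    have := RealRMK.integral_rieszMeasure Λ ⟨f.toContinuousMap, hf⟩
    exact this
  have hIntg : ∀ (f : X →ᵇ ℝ), HasCompactSupport f → Integrable f Q := by
    intro f hf
    exact f.continuous.integrable_of_hasCompactSupport hf
  have hfin : Q univ ≤ 1 := by
    have e1 : Q univ = ∫⁻ x, liminf (fun k => ENNReal.ofReal (χ k x)) atTop ∂Q := by
      rw [← lintegral_one]
      refine lintegral_congr fun x => ?_
      have := (ENNReal.tendsto_ofReal (hχlim x)).liminf_eq
      rw [this]; simp
    rw [e1]
    refine (lintegral_liminf_le fun k => (χ k).continuous.measurable.ennreal_ofReal).trans ?_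
    have e2 : ∀ k, ∫⁻ x, ENNReal.ofReal (χ k x) ∂Q = ENNReal.ofReal (L (χ k)) := by
      intro k
      rw [← hrep _ (hχc k), ofReal_integral_eq_lintegral_ofReal (hIntg _ (hχc k))
        (Eventually.of_forall (hχ0 k))]
    simp_rw [e2]
    have := (ENNReal.tendsto_ofReal hL).liminf_eq
    rw [this]; simp
  have : IsFiniteMeasure Q := ⟨hfin.trans_lt ENNReal.one_lt_top⟩
  have hall : ∀ f : X →ᵇ ℝ, ∫ x, f x ∂Q = L f := by
    intro f
    have t1 : Tendsto (fun k => ∫ x, (f * χ k) x ∂Q) atTop (𝓝 (∫ x, f x ∂Q)) := by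
      refine tendsto_integral_of_dominated_convergence (fun _ => ‖f‖)
        (fun k => (hIntg (f * χ k) (hχc k).mul_left).aestronglyMeasurable)
        (integrable_const _) ?_ ?_
      · intro k
        refine Eventually.of_forall fun x => ?_
        simp only [BoundedContinuousFunction.coe_mul, Pi.mul_apply, norm_mul]
        have := f.norm_coe_le_norm x
        have h2 : ‖χ k x‖ ≤ 1 := by
          rw [Real.norm_of_nonneg (hχ0 k x)]; exact hχ1 k x
        calc ‖f x‖ * ‖χ k x‖ ≤ ‖f‖ * 1 := by gcongr
          _ = ‖f‖ := mul_one _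
      · refine Eventually.of_forall fun x => ?_
        simpa using (hχlim x).const_mul (f x)
    have t2 : Tendsto (fun k => ∫ x, (f * χ k) x ∂Q) atTop (𝓝 (L f)) := by
      have e : ∀ k, ∫ x, (f * χ k) x ∂Q = L (f * χ k) := fun k => hrep _ ((hχc k).mul_left)
      simp_rw [e]
      rw [tendsto_iff_norm_sub_tendsto_zero]
      have t3 : Tendsto (fun k => ‖f‖ * (1 - L (χ k))) atTop (𝓝 0) := by
        simpa using ((tendsto_const_nhds (x := (1 : ℝ))).sub hL).const_mul ‖f‖
      refine squeeze_zero (fun _ => norm_nonneg _) (fun k => ?_) t3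
      have b : ∀ x, |f x| * (1 - χ k x) ≤ ‖f‖ * (1 - χ k x) := fun x =>
        mul_le_mul_of_nonneg_right (f.norm_coe_le_norm x) (by linarith [hχ1 k x])
      have b0 : ∀ x, 0 ≤ 1 - χ k x := fun x => by linarith [hχ1 k x]
      have e1 : L (‖f‖ • (1 - χ k)) = ‖f‖ * (1 - L (χ k)) := by
        rw [map_smul, map_sub, h1, smul_eq_mul]
      rw [← e1, Real.norm_eq_abs, abs_le, ← map_sub, ← map_neg]
      constructor
      · refine hmono _ _ fun x => ?_
        have := mul_le_mul_of_nonneg_right (le_abs_self (f x)) (b0 x)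
        simp
        nlinarith [b x]
      · refine hmono _ _ fun x => ?_
        have := mul_le_mul_of_nonneg_right (neg_le_abs (f x)) (b0 x)
        simp
        nlinarith [b x]
    exact tendsto_nhds_unique t1 t2
  refine ⟨Q, ⟨?_⟩, hall⟩
  have := hall 1
  rw [h1] at this
  simp only [BoundedContinuousFunction.coe_one, Pi.one_apply, integral_const, smul_eq_mul,
    mul_one] at this
  rw [← ENNReal.ofReal_toReal (measure_ne_top Q univ)]
  rw [measureReal_def] at this
  rw [this]; simp


/-! ### Measure-theoretic lemmas -/

lemma put_diff_bounds (K h x : ℝ) (hh : 0 < h) :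
    0 ≤ (max (K + h - x) 0 - max (K - x) 0) / h ∧
    (max (K + h - x) 0 - max (K - x) 0) / h ≤ 1 := by
  constructor
  · apply div_nonneg _ hh.le
    have : max (K - x) 0 ≤ max (K + h - x) 0 := max_le_max (by linarith) le_rfl
    linarith
  · rw [div_le_one hh]
    have : max (K + h - x) 0 ≤ max (K - x) 0 + h :=
      max_le (by linarith [le_max_left (K - x) 0]) (by linarith [le_max_right (K - x) 0])
    linarith

lemma integrable_put (μ : Measure ℝ) [IsProbabilityMeasure μ] (h0 : μ (Iio 0) = 0) (K : ℝ) :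
    Integrable (fun x => max (K - x) 0) μ := by
  refine Integrable.of_bound (C := |K|) (by fun_prop) ?_
  have : ∀ᵐ x ∂μ, x ∉ Iio (0 : ℝ) := measure_eq_zero_iff_ae_notMem.1 h0
  filter_upwards [this] with x hx
  have hx : 0 ≤ x := by simpa using hx
  rw [Real.norm_of_nonneg (le_max_right _ _)]
  exact max_le (by linarith [le_abs_self K]) (abs_nonneg _)

lemma tendsto_put_diff (μ : Measure ℝ) [IsProbabilityMeasure μ] (K : ℝ) :
    Tendsto (fun k : ℕ => ∫ x, (max (K + 1 / ((k : ℝ) + 1) - x) 0 - max (K - x) 0)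
      / (1 / ((k : ℝ) + 1)) ∂μ) atTop (𝓝 (μ.real (Iic K))) := by
  have e : μ.real (Iic K) = ∫ x, (Iic K).indicator (fun _ => (1 : ℝ)) x ∂μ := by
    rw [integral_indicator measurableSet_Iic]; simp
  rw [e]
  refine tendsto_integral_of_dominated_convergence (fun _ => 1) (fun k => ?_)
    (integrable_const _) ?_ ?_
  · exact Measurable.aestronglyMeasurable (by fun_prop)
  · intro k
    refine Eventually.of_forall fun x => ?_
    have := put_diff_bounds K (1 / ((k : ℝ) + 1)) x (by positivity)
    rw [Real.norm_of_nonneg this.1]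
    exact this.2
  · refine Eventually.of_forall fun x => ?_
    by_cases hx : x ≤ K
    · rw [indicator_of_mem (by simpa using hx)]
      refine tendsto_const_nhds.congr fun k => ?_
      have hk : (0 : ℝ) < 1 / ((k : ℝ) + 1) := by positivity
      rw [max_eq_left (by linarith), max_eq_left (by linarith)]
      field_simp
      ring
    · rw [indicator_of_notMem (by simpa using hx)]
      push Not at hx
      refine tendsto_const_nhds.congr' ?_
      have := tendsto_one_div_add_atTop_nhds_zero_nat (𝕜 := ℝ)
      filter_upwards [this.eventually (gt_mem_nhds (sub_pos.2 hx))] with k hk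
      rw [max_eq_right (by linarith), max_eq_right (by linarith)]
      simp

theorem puts_determine (μ ν : Measure ℝ) [IsProbabilityMeasure μ] [IsProbabilityMeasure ν]
    (hμ : μ (Iio 0) = 0) (hν : ν (Iio 0) = 0)
    (h : ∀ K, 0 ≤ K → ∫ x, max (K - x) 0 ∂μ = ∫ x, max (K - x) 0 ∂ν) : μ = ν := by
  refine Measure.ext_of_Iic _ _ fun K => ?_
  rcases lt_or_ge K 0 with hK | hK
  · have hs : Iic K ⊆ Iio 0 := fun x hx => lt_of_le_of_lt hx hK
    rw [measure_mono_null hs hμ, measure_mono_null hs hν]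
  · have t1 := tendsto_put_diff μ K
    have t2 := tendsto_put_diff ν K
    have e : ∀ k : ℕ, ∫ x, (max (K + 1 / ((k : ℝ) + 1) - x) 0 - max (K - x) 0)
      / (1 / ((k : ℝ) + 1)) ∂μ = ∫ x, (max (K + 1 / ((k : ℝ) + 1) - x) 0 - max (K - x) 0)
      / (1 / ((k : ℝ) + 1)) ∂ν := by
      intro k
      have hk : (0 : ℝ) < 1 / ((k : ℝ) + 1) := by positivity
      rw [integral_div, integral_div, integral_sub (integrable_put μ hμ _) (integrable_put μ hμ _),
        integral_sub (integrable_put ν hν _) (integrable_put ν hν _), h _ hK,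
        h _ (by linarith)]
    simp_rw [e] at t1
    have := tendsto_nhds_unique t1 t2
    rw [measureReal_def, measureReal_def,
      ENNReal.toReal_eq_toReal_iff' (measure_ne_top _ _) (measure_ne_top _ _)] at this
    exact this

lemma tendsto_tail (μ : Measure ℝ) [IsProbabilityMeasure μ] (h0 : μ (Iio 0) = 0) :
    Tendsto (fun k : ℕ => 1 - (∫ x, max (((k : ℝ) + 1) - x) 0 ∂μ) / ((k : ℝ) + 1)) atTop
      (𝓝 0) := by
  have : Tendsto (fun k : ℕ => ∫ x, max (((k : ℝ) + 1) - x) 0 / ((k : ℝ) + 1) ∂μ) atTop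
      (𝓝 (∫ _x, (1 : ℝ) ∂μ)) := by
    refine tendsto_integral_of_dominated_convergence (fun _ => 1) (fun k => ?_)
      (integrable_const _) ?_ ?_
    · exact Measurable.aestronglyMeasurable (by fun_prop)
    · intro k
      have : ∀ᵐ x ∂μ, x ∉ Iio (0 : ℝ) := measure_eq_zero_iff_ae_notMem.1 h0
      filter_upwards [this] with x hx
      have hx : 0 ≤ x := by simpa using hx
      rw [Real.norm_of_nonneg (div_nonneg (le_max_right _ _) (by positivity)),
        div_le_one (by positivity)]
      exact max_le (by linarith) (by positivity)
    · refine Eventually.of_forall fun x => ?_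
      have t : Tendsto (fun k : ℕ => 1 - x * (1 / ((k : ℝ) + 1))) atTop (𝓝 1) := by
        simpa using (tendsto_const_nhds (x := (1 : ℝ))).sub
          ((tendsto_one_div_add_atTop_nhds_zero_nat (𝕜 := ℝ)).const_mul x)
      refine t.congr' ?_
      filter_upwards [eventually_ge_atTop ⌈x⌉₊] with k hk
      have : x ≤ k := (Nat.le_ceil x).trans (by exact_mod_cast hk)
      rw [max_eq_left (by linarith)]
      field_simp
  simp only [integral_div] at this
  simpa using (tendsto_const_nhds (x := (1 : ℝ))).sub this

section
variable {Ω Y : Type*} [MeasurableSpace Ω] [MeasurableSpace Y] {Q : Measure Ω}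
  {r : Ω → Y} {u v : Ω → ℝ}

/-- The law of `r` under `u dQ`. -/
def wlaw (Q : Measure Ω) (r : Ω → Y) (u : Ω → ℝ) : Measure Y :=
  (Q.withDensity fun ω => ENNReal.ofReal (u ω)).map r

lemma wlaw_finite (hu : Integrable u Q) :
    IsFiniteMeasure (wlaw Q r u) := by
  have : IsFiniteMeasure (Q.withDensity fun ω => ENNReal.ofReal (u ω)) :=
    isFiniteMeasure_withDensity_ofReal hu.2
  unfold wlaw
  infer_instance

lemma integrable_bdd_mul (hr : Measurable r) (hu : Integrable u Q) {h : Y → ℝ}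
    (hm : Measurable h) {C : ℝ} (hC : ∀ y, |h y| ≤ C) :
    Integrable (fun ω => h (r ω) * u ω) Q :=
  hu.bdd_mul (c := C) (hm.comp hr).aestronglyMeasurable (Eventually.of_forall fun ω => hC _)

lemma lintegral_wlaw (hr : Measurable r) (hum : Measurable u) (hu : Integrable u Q)
    (hu0 : ∀ᵐ ω ∂Q, 0 ≤ u ω) {h : Y → ℝ}
    (hm : Measurable h) {C : ℝ} (hC : ∀ y, |h y| ≤ C) (h0 : ∀ y, 0 ≤ h y) :
    ∫⁻ y, ENNReal.ofReal (h y) ∂(wlaw Q r u) = ENNReal.ofReal (∫ ω, h (r ω) * u ω ∂Q) := by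
  unfold wlaw
  have hm2 : Measurable fun ω => ENNReal.ofReal (h (r ω)) := (hm.comp hr).ennreal_ofReal
  rw [lintegral_map hm.ennreal_ofReal hr,
    lintegral_withDensity_eq_lintegral_mul _ hum.ennreal_ofReal hm2,
    ofReal_integral_eq_lintegral_ofReal (integrable_bdd_mul hr hu hm hC)]
  · refine lintegral_congr fun ω => ?_
    simp only [Pi.mul_apply, Function.comp]
    rw [ENNReal.ofReal_mul (h0 _), mul_comm]
  · filter_upwards [hu0] with ω hω
    exact mul_nonneg (h0 _) hω

lemma wlaw_bridge (hr : Measurable r) (hum : Measurable u) (hu : Integrable u Q)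
    (hu0 : ∀ᵐ ω ∂Q, 0 ≤ u ω) (hvm : Measurable v) (hv : Integrable v Q)
    (hv0 : ∀ᵐ ω ∂Q, 0 ≤ v ω) {h : Y → ℝ}
    (hm : Measurable h) {C : ℝ} (hC : ∀ y, |h y| ≤ C) (h0 : ∀ y, 0 ≤ h y) :
    ∫ ω, h (r ω) * (u ω - v ω) ∂Q ≤ 0 ↔
      ∫⁻ y, ENNReal.ofReal (h y) ∂(wlaw Q r u) ≤ ∫⁻ y, ENNReal.ofReal (h y) ∂(wlaw Q r v) := by
  rw [lintegral_wlaw hr hum hu hu0 hm hC h0, lintegral_wlaw hr hvm hv hv0 hm hC h0,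
    ENNReal.ofReal_le_ofReal_iff]
  · simp_rw [mul_sub]
    rw [integral_sub (integrable_bdd_mul hr hu hm hC) (integrable_bdd_mul hr hv hm hC)]
    exact sub_nonpos
  · refine integral_nonneg_of_ae ?_
    filter_upwards [hv0] with ω hω
    exact mul_nonneg (h0 _) hω

lemma wlaw_le_iff (hr : Measurable r) (hum : Measurable u) (hu : Integrable u Q)
    (hu0 : ∀ᵐ ω ∂Q, 0 ≤ u ω) (hvm : Measurable v) (hv : Integrable v Q)
    (hv0 : ∀ᵐ ω ∂Q, 0 ≤ v ω) :
    (∀ A : Set Y, MeasurableSet A →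
      ∫ ω, Set.indicator A (fun _ => (1 : ℝ)) (r ω) * (u ω - v ω) ∂Q ≤ 0) ↔
      wlaw Q r u ≤ wlaw Q r v := by
  rw [Measure.le_iff]
  refine forall₂_congr fun A hA => ?_
  rw [wlaw_bridge hr hum hu hu0 hvm hv hv0 (measurable_const.indicator hA) (C := 1)]
  · have : ∀ y, ENNReal.ofReal (A.indicator (fun _ => (1 : ℝ)) y) =
        A.indicator (fun _ => (1 : ℝ≥0∞)) y := by
      intro y
      by_cases hy : y ∈ A <;> simp [hy]
    simp_rw [this]
    rw [lintegral_indicator hA, lintegral_indicator hA]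
    simp
  · intro y
    by_cases hy : y ∈ A <;> simp [hy]
  · intro y
    exact indicator_nonneg (fun _ _ => zero_le_one) _

end

lemma measure_le_of_bcf {Y : Type*} [PseudoMetricSpace Y] [MeasurableSpace Y] [BorelSpace Y]
    (μ ν : Measure Y) [IsFiniteMeasure μ] [IsFiniteMeasure ν]
    (h : ∀ f : Y →ᵇ ℝ≥0, ∫⁻ y, f y ∂μ ≤ ∫⁻ y, f y ∂ν) : μ ≤ ν := by
  rw [Measure.le_iff]
  intro A hA
  refine ENNReal.le_of_forall_pos_le_add fun ε hε _ => ?_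
  obtain ⟨F, hFA, hF, hlt⟩ := hA.exists_isClosed_lt_add (measure_ne_top μ A)
    (ε := ε) (by exact_mod_cast hε.ne')
  refine hlt.le.trans ?_
  refine add_le_add (le_trans ?_ (measure_mono hFA)) le_rfl
  exact le_of_tendsto_of_tendsto' (HasOuterApproxClosed.tendsto_lintegral_apprSeq hF μ)
    (HasOuterApproxClosed.tendsto_lintegral_apprSeq hF ν) fun k => h _


/-! ### Supermartingale measures are calibrated; weak duality -/

lemma eexp_of_integrable {n : ℕ} {Q : Measure (Path n)} {f : Path n → ℝ} (hf : Integrable f Q) :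
    eexp Q f = ((∫ ω, f ω ∂Q : ℝ) : EReal) := by
  unfold eexp
  rw [integral_eq_lintegral_pos_part_sub_lintegral_neg_part hf, EReal.coe_sub]
  have h1 : ∫⁻ ω, ENNReal.ofReal (f ω) ∂Q ≠ ⊤ := hf.lintegral_lt_top.ne
  have h2 : ∫⁻ ω, ENNReal.ofReal (-(f ω)) ∂Q ≠ ⊤ := hf.neg.lintegral_lt_top.ne
  rw [EReal.coe_ennreal_toReal h1, EReal.coe_ennreal_toReal h2]

lemma measurable_restr {n : ℕ} (j : Fin n) : Measurable (restr j : Path n → (Fin j → ℝ)) := by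
  unfold restr
  fun_prop

lemma ae_of_measure_one {Ω : Type*} [MeasurableSpace Ω] {Q : Measure Ω} [IsProbabilityMeasure Q]
    {A : Set Ω} (hA : MeasurableSet A) (h : Q A = 1) : ∀ᵐ ω ∂Q, ω ∈ A := by
  rw [ae_iff]
  exact (prob_compl_eq_zero_iff hA).2 h

lemma measurableSet_Omega (n : ℕ) (s₀ : ℝ) : MeasurableSet (Omega n s₀) := by
  unfold Omega
  refine MeasurableSet.inter ?_ ?_
  · exact measurableSet_eq_fun (measurable_pi_apply 0) measurable_const
  · have : {ω : Path n | ∀ i, 0 ≤ ω i} = ⋂ i, {ω | 0 ≤ ω i} := by ext; simp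
    change MeasurableSet {ω : Path n | ∀ i, 0 ≤ ω i}
    rw [this]
    exact MeasurableSet.iInter fun i => measurableSet_le measurable_const (measurable_pi_apply i)

section
variable {n : ℕ} {s₀ : ℝ} {P : Set (Path n)} {p : Fin n → ℝ → ℝ} {μ : Fin n → Measure ℝ}
  {Q : Measure (Path n)}

lemma coord_integrable (hμi : ∀ i, Integrable (fun x => x) (μ i)) (hQ : Q ∈ PiMu s₀ μ)
    (i : Fin (n + 1)) : Integrable (fun ω : Path n => ω i) Q := by
  obtain ⟨hp, hO, hm⟩ := hQ
  have hae := ae_of_measure_one (measurableSet_Omega n s₀) hO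
  refine Fin.cases ?_ (fun i => ?_) i
  · refine (integrable_const s₀).congr ?_
    filter_upwards [hae] with ω hω
    exact hω.1.symm
  · have := hμi i
    rw [← hm i] at this
    exact (integrable_map_measure (f := fun ω : Path n => ω i.succ) this.1
      (measurable_pi_apply _).aemeasurable).1 this

lemma supermart_wlaw (hIntg : ∀ i, Integrable (fun ω : Path n => ω i) Q)
    (h0 : ∀ᵐ ω ∂Q, ∀ i, 0 ≤ ω i) :
    IsSupermartingaleLaw Q ↔ ∀ j : Fin n, wlaw Q (restr j) (fun ω => ω j.succ) ≤
      wlaw Q (restr j) (fun ω => ω j.castSucc) := by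
  refine forall_congr' fun j => ?_
  exact wlaw_le_iff (measurable_restr j) (measurable_pi_apply _) (hIntg _)
    (h0.mono fun ω h => h _) (measurable_pi_apply _) (hIntg _) (h0.mono fun ω h => h _)

theorem calibrated_of_MSetP (hμ : PutPricesFrom p μ) (hQ : Q ∈ MSetP s₀ μ P) :
    Calibrated Static.putPayoff p P Q := by
  obtain ⟨⟨hPi, hS⟩, hP⟩ := hQ
  have hIntg := coord_integrable hμ.2.2.1 hPi
  obtain ⟨hp, hO, hm⟩ := hPi
  have hae := ae_of_measure_one (measurableSet_Omega n s₀) hO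
  have h0 : ∀ᵐ ω ∂Q, ∀ i, 0 ≤ ω i := hae.mono fun ω h => h.2
  rw [supermart_wlaw hIntg h0] at hS
  refine ⟨hp, hP, fun X D hD => ?_⟩
  have hput : ∀ (i : Fin n) (K : ℝ), Integrable (fun ω : Path n => max (K - ω i.succ) 0) Q :=
    fun i K => ((integrable_const K).sub (hIntg i.succ)).sup (integrable_const 0)
  have hpp : ∀ (i : Fin n) (K : ℝ), 0 ≤ K → ∫ ω, max (K - ω i.succ) 0 ∂Q = p i K := by
    intro i K hK
    rw [hμ.2.2.2 i K hK, ← hm i, integral_map (measurable_pi_apply _).aemeasurable (by fun_prop)]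
  have hXi : Integrable X.putPayoff Q := by
    unfold Static.putPayoff
    exact (integrable_const _).add (integrable_finsetSum _ fun k _ => (hput _ _).const_mul _)
  have hXv : ∫ ω, X.putPayoff ω ∂Q = X.price p := by
    unfold Static.putPayoff Static.price
    rw [integral_add (integrable_const _)
      (integrable_finsetSum _ fun k _ => (hput _ _).const_mul _),
      integral_finsetSum _ fun k _ => (hput _ _).const_mul _]
    simp only [integral_const_mul, integral_const, probReal_univ, one_smul]
    congr 1
    refine Finset.sum_congr rfl fun k _ => ?_
    rw [hpp _ _ (X.strike_nonneg k)]
  have hDi : ∀ j, Integrable (fun ω => D.pos j (restr j ω) * (ω j.succ - ω j.castSucc)) Q := by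
    intro j
    obtain ⟨C, hC⟩ := D.bdd j
    exact integrable_bdd_mul (measurable_restr j) ((hIntg _).sub (hIntg _)) (D.meas j) hC
  have hDv : ∀ j, ∫ ω, D.pos j (restr j ω) * (ω j.succ - ω j.castSucc) ∂Q ≤ 0 := by
    intro j
    obtain ⟨C, hC⟩ := D.bdd j
    rw [wlaw_bridge (measurable_restr j) (measurable_pi_apply _) (hIntg _)
      (h0.mono fun ω h => h _) (measurable_pi_apply _) (hIntg _) (h0.mono fun ω h => h _)
      (D.meas j) hC (hD j)]
    exact lintegral_mono' (hS j) le_rfl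
  have hDI : Integrable D.gains Q := by
    unfold Dyn.gains
    exact integrable_finsetSum _ fun j _ => hDi j
  have hsum : Integrable (fun ω => X.putPayoff ω + D.gains ω) Q := hXi.add hDI
  rw [eexp_of_integrable hsum, integral_add hXi hDI, hXv]
  have : ∫ ω, D.gains ω ∂Q ≤ 0 := by
    unfold Dyn.gains
    rw [integral_finsetSum _ fun j _ => hDi j]
    exact Finset.sum_nonpos fun j _ => hDv j
  exact_mod_cast by linarith

lemma posE_coe (x : ℝ) : posE (x : EReal) = ENNReal.ofReal x := by
  simp [posE]

lemma posE_mono : Monotone posE := by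
  intro x y h
  induction x using EReal.rec with
  | bot => simp [posE]
  | top => rw [top_le_iff] at h; simp [h]
  | coe a =>
    induction y using EReal.rec with
    | bot => exact absurd h (by simp)
    | top => simp [posE]
    | coe b =>
      rw [posE_coe, posE_coe]
      exact ENNReal.ofReal_le_ofReal (by exact_mod_cast h)

theorem weak_duality (hPc : IsClosed P) (hQ : Calibrated Static.putPayoff p P Q)
    (H : Path n → EReal) : eexpE Q H ≤ V Static.putPayoff p P H := by
  obtain ⟨hp, hP, hX⟩ := hQ
  have hae := ae_of_measure_one hPc.measurableSet hP
  refine le_sInf ?_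
  rintro q ⟨X, D, hD, rfl, hh⟩
  refine le_trans ?_ (hX X D hD)
  unfold eexpE eexp
  refine EReal.sub_le_sub ?_ ?_
  · rw [EReal.coe_ennreal_le_coe_ennreal_iff]
    refine lintegral_mono_ae ?_
    filter_upwards [hae] with ω hω
    rw [← posE_coe]
    exact posE_mono (hh ω hω)
  · rw [EReal.coe_ennreal_le_coe_ennreal_iff]
    refine lintegral_mono_ae ?_
    filter_upwards [hae] with ω hω
    rw [← posE_coe, EReal.coe_neg]
    exact posE_mono (EReal.neg_le_neg_iff.2 (hh ω hω))

end


/-! ### From the functional to a supermartingale measure -/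

/-- The last observed price, as a function of the history. -/
def prevS {n : ℕ} (s₀ : ℝ) (j : Fin n) (r : Fin j → ℝ) : ℝ :=
  if h : 0 < (j : ℕ) then r ⟨(j : ℕ) - 1, by omega⟩ else s₀

lemma prevS_measurable {n : ℕ} (s₀ : ℝ) (j : Fin n) : Measurable (prevS s₀ j) := by
  unfold prevS
  by_cases h : 0 < (j : ℕ)
  · simp only [h, dite_true]; exact measurable_pi_apply _
  · simp only [h, dite_false]; exact measurable_const

lemma prevS_restr {n : ℕ} (s₀ : ℝ) (j : Fin n) (ω : Path n) (h0 : ω 0 = s₀) :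
    prevS s₀ j (restr j ω) = ω j.castSucc := by
  unfold prevS restr
  split_ifs with h
  · congr 1
    ext
    simp
    omega
  · rw [← h0]
    congr 1
    ext
    simp
    omega

/-- A put option as a bounded continuous function. -/
def putB {n : ℕ} (i : Fin n) (K : ℝ) : Path n →ᵇ ℝ :=
  BoundedContinuousFunction.ofNormedAddCommGroup
    (fun ω : Path n => max (K - max (ω i.succ) 0) 0) (by fun_prop) |K| (by
      intro ω
      rw [Real.norm_eq_abs, abs_of_nonneg (le_max_right _ _)]
      refine max_le ?_ (abs_nonneg _)
      have := le_max_right (ω i.succ) 0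
      linarith [le_abs_self K])

lemma putB_apply {n : ℕ} (i : Fin n) (K : ℝ) (ω : Path n) :
    putB i K ω = max (K - max (ω i.succ) 0) 0 := rfl

/-- Cut-off functions. -/
def cut (n : ℕ) (k : ℕ) : Path n →ᵇ ℝ :=
  BoundedContinuousFunction.ofNormedAddCommGroup
    (fun ω : Path n => max 0 (min 1 (2 - ‖ω‖ / ((k : ℝ) + 1)))) (by fun_prop) 1 (by
      intro ω
      rw [Real.norm_eq_abs, abs_of_nonneg (le_max_left _ _)]
      exact max_le zero_le_one (min_le_left _ _))

lemma cut_apply (n k : ℕ) (ω : Path n) :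
    cut n k ω = max 0 (min 1 (2 - ‖ω‖ / ((k : ℝ) + 1))) := rfl

lemma cut_nonneg (n k : ℕ) (ω : Path n) : 0 ≤ cut n k ω := le_max_left _ _

lemma cut_le_one (n k : ℕ) (ω : Path n) : cut n k ω ≤ 1 :=
  max_le zero_le_one (min_le_left _ _)

lemma cut_eq_one {n k : ℕ} {ω : Path n} (h : ‖ω‖ ≤ (k : ℝ) + 1) : cut n k ω = 1 := by
  have hk : (0 : ℝ) < (k : ℝ) + 1 := by positivity
  have : ‖ω‖ / ((k : ℝ) + 1) ≤ 1 := (div_le_one hk).2 h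
  rw [cut_apply, min_eq_left (by linarith), max_eq_right zero_le_one]

lemma cut_compact (n k : ℕ) : HasCompactSupport (cut n k) := by
  refine HasCompactSupport.intro (isCompact_closedBall (0 : Path n) (2 * ((k : ℝ) + 1))) ?_
  intro ω hω
  have hk : (0 : ℝ) < (k : ℝ) + 1 := by positivity
  rw [mem_closedBall_zero_iff, not_le] at hω
  have : 2 ≤ ‖ω‖ / ((k : ℝ) + 1) := (le_div_iff₀ hk).2 hω.le
  rw [cut_apply]
  exact max_eq_left ((min_le_right _ _).trans (by linarith))

lemma cut_tendsto (n : ℕ) (ω : Path n) : Tendsto (fun k => cut n k ω) atTop (𝓝 1) := by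
  refine tendsto_const_nhds.congr' ?_
  obtain ⟨N, hN⟩ := exists_nat_ge ‖ω‖
  filter_upwards [eventually_ge_atTop N] with k hk
  refine (cut_eq_one ?_).symm
  have : (N : ℝ) ≤ k := by exact_mod_cast hk
  linarith

/-- Clipping to `[0, M]`. -/
def clip (M x : ℝ) : ℝ := min (max x 0) M

lemma clip_cont (M : ℝ) : Continuous (clip M) := by unfold clip; fun_prop

lemma clip_abs {M : ℝ} (hM : 0 ≤ M) (x : ℝ) : |clip M x| ≤ M := by
  unfold clip
  rw [abs_of_nonneg (le_min (le_max_right _ _) hM)]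
  exact min_le_right _ _

lemma clip_abs_le {M : ℝ} (hM : 0 ≤ M) (x : ℝ) : |clip M x| ≤ |x| := by
  unfold clip
  rw [abs_of_nonneg (le_min (le_max_right _ _) hM)]
  exact (min_le_left _ _).trans (max_le (le_abs_self _) (abs_nonneg _))

lemma clip_tendsto {x : ℝ} (hx : 0 ≤ x) :
    Tendsto (fun k : ℕ => clip (k : ℝ) x) atTop (𝓝 x) := by
  refine tendsto_const_nhds.congr' ?_
  obtain ⟨N, hN⟩ := exists_nat_ge x
  filter_upwards [eventually_ge_atTop N] with k hk
  have : (N : ℝ) ≤ k := by exact_mod_cast hk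
  unfold clip
  rw [max_eq_left hx, min_eq_left (by linarith)]

lemma clip_diff {M x y : ℝ} (hx : 0 ≤ x) (hy : 0 ≤ y) :
    clip M y - clip M x ≤ (if x < M then 1 else 0) * (y - x) := by
  unfold clip
  rw [max_eq_left hx, max_eq_left hy]
  split_ifs with h
  · rw [min_eq_left h.le]
    linarith [min_le_left y M]
  · rw [min_eq_right (not_lt.1 h)]
    linarith [min_le_right y M]

lemma restr_cont {n : ℕ} (j : Fin n) : Continuous (restr j : Path n → (Fin j → ℝ)) := by
  unfold restr
  fun_prop

/-- A truncated gains process. -/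
def clipGain {n : ℕ} (j : Fin n) (Δ : (Fin j → ℝ) →ᵇ ℝ≥0) (M : ℝ) (C : ℝ)
    (hC : ∀ x, (Δ x : ℝ) ≤ C) (hM : 0 ≤ M) : Path n →ᵇ ℝ :=
  BoundedContinuousFunction.ofNormedAddCommGroup
    (fun ω : Path n => (Δ (restr j ω) : ℝ) * (clip M (ω j.succ) - clip M (ω j.castSucc)))
    (by
      have h1 := restr_cont j
      have h2 := clip_cont M
      have h3 : Continuous fun ω : Path n => (Δ (restr j ω) : ℝ) :=
        NNReal.continuous_coe.comp (Δ.continuous.comp h1)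
      have h4 : ∀ i, Continuous fun ω : Path n => clip M (ω i) := fun i =>
        h2.comp (continuous_apply i)
      exact h3.mul ((h4 _).sub (h4 _)))
    (C * (M + M)) (by
      intro ω
      rw [Real.norm_eq_abs, abs_mul, abs_of_nonneg (NNReal.coe_nonneg (Δ (restr j ω)))]
      have h1 := clip_abs hM (ω j.succ)
      have h2 := clip_abs hM (ω j.castSucc)
      have h3 := abs_sub (clip M (ω j.succ)) (clip M (ω j.castSucc))
      exact mul_le_mul (hC _) (by linarith) (abs_nonneg _) ((Δ (restr j ω)).2.trans (hC _)))

section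
variable {n : ℕ} {s₀ : ℝ} {P : Set (Path n)} {p : Fin n → ℝ → ℝ} {μ : Fin n → Measure ℝ}

lemma L_mono {L : (Path n →ᵇ ℝ) →ₗ[ℝ] ℝ} (hL : ∀ f, Hg p P 0 (fun ω => - f ω) → 0 ≤ L f)
    {f g : Path n →ᵇ ℝ} (h : ∀ ω ∈ P, f ω ≤ g ω) : L f ≤ L g := by
  have := hL (g - f) (Hg.zero.mono fun ω hω => by
    simp only [BoundedContinuousFunction.coe_sub, Pi.sub_apply]
    linarith [h ω hω])
  rw [map_sub] at this
  linarith

lemma L_put {L : (Path n →ᵇ ℝ) →ₗ[ℝ] ℝ} (hL : ∀ f, Hg p P 0 (fun ω => - f ω) → 0 ≤ L f)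
    (hL1 : L 1 = 1) (hPs : P ⊆ Omega n s₀) (i : Fin n) {K : ℝ} (hK : 0 ≤ K) :
    L (putB i K) = p i K := by
  have key : ∀ a : ℝ, 0 ≤ L (a • (putB i K - p i K • 1)) := by
    intro a
    refine hL _ ⟨(Static.single i K hK).smul (-a) (a * p i K), Dyn.zero, Dyn.zero_nonneg, ?_, ?_⟩
    · rw [Static.smul_price, Static.single_price]; ring
    · intro ω hω
      have h0 := (hPs hω).2 i.succ
      rw [Static.smul_putPayoff, Static.single_putPayoff, Dyn.zero_gains]
      have : (a • (putB i K - p i K • (1 : Path n →ᵇ ℝ))) ω = a * (putB i K ω - p i K * 1) := rfl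
      beta_reduce
      rw [this, putB_apply, max_eq_left h0]
      exact le_of_eq (by ring)
  have h1 := key 1
  have h2 := key (-1)
  simp only [map_smul, map_sub, hL1, smul_eq_mul] at h1 h2
  linarith

lemma L_cut {L : (Path n →ᵇ ℝ) →ₗ[ℝ] ℝ} (hL : ∀ f, Hg p P 0 (fun ω => - f ω) → 0 ≤ L f)
    (hL1 : L 1 = 1) (hPs : P ⊆ Omega n s₀) (hμ : PutPricesFrom p μ) :
    Tendsto (fun k => L (cut n k)) atTop (𝓝 1) := by
  have hlim : Tendsto (fun k : ℕ => 1 - ∑ i : Fin n, (1 - p i ((k : ℝ) + 1) / ((k : ℝ) + 1)))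
      atTop (𝓝 1) := by
    have : Tendsto (fun k : ℕ => ∑ i : Fin n, (1 - p i ((k : ℝ) + 1) / ((k : ℝ) + 1)))
        atTop (𝓝 (∑ _i : Fin n, 0)) := by
      refine tendsto_finsetSum _ fun i _ => ?_
      have := hμ.1 i
      refine (tendsto_tail (μ i) (hμ.2.1 i)).congr fun k => ?_
      rw [hμ.2.2.2 i _ (by positivity)]
    simpa using tendsto_const_nhds.sub this
  refine tendsto_of_tendsto_of_tendsto_of_le_of_le' hlim tendsto_const_nhds ?_ ?_
  · obtain ⟨N, hN⟩ := exists_nat_ge s₀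
    filter_upwards [eventually_ge_atTop N] with k hk
    have hk' : (N : ℝ) ≤ k := by exact_mod_cast hk
    have hR : (0 : ℝ) < (k : ℝ) + 1 := by positivity
    have hle : L (1 - ∑ i : Fin n, (1 - ((k : ℝ) + 1)⁻¹ • putB i ((k : ℝ) + 1))) ≤
        L (cut n k) := by
      refine L_mono hL fun ω hω => ?_
      have hval : (1 - ∑ i : Fin n, (1 - ((k : ℝ) + 1)⁻¹ • putB i ((k : ℝ) + 1)) :
          Path n →ᵇ ℝ) ω = 1 - ∑ i : Fin n, (1 - ((k : ℝ) + 1)⁻¹ * putB i ((k : ℝ) + 1) ω) := by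
        simp [BoundedContinuousFunction.coe_sum]
      rw [hval]
      have hterm : ∀ i : Fin n, 0 ≤ 1 - ((k : ℝ) + 1)⁻¹ * putB i ((k : ℝ) + 1) ω := by
        intro i
        have h0 := (hPs hω).2 i.succ
        have : putB i ((k : ℝ) + 1) ω ≤ (k : ℝ) + 1 := by
          rw [putB_apply, max_eq_left h0]
          exact max_le (by linarith) hR.le
        have := mul_le_mul_of_nonneg_left this (inv_nonneg.2 hR.le)
        rw [inv_mul_cancel₀ hR.ne'] at this
        linarith
      by_cases hnorm : ‖ω‖ ≤ (k : ℝ) + 1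
      · rw [cut_eq_one hnorm]
        linarith [Finset.sum_nonneg fun i (_ : i ∈ Finset.univ) => hterm i]
      · rw [pi_norm_le_iff_of_nonneg hR.le] at hnorm
        push Not at hnorm
        obtain ⟨j, hj⟩ := hnorm
        rw [Real.norm_eq_abs, abs_of_nonneg ((hPs hω).2 j)] at hj
        have hj0 : j ≠ 0 := by
          rintro rfl
          rw [(hPs hω).1] at hj
          linarith
        obtain ⟨i, rfl⟩ := Fin.exists_succ_eq.2 hj0
        have h1 : 1 - ((k : ℝ) + 1)⁻¹ * putB i ((k : ℝ) + 1) ω = 1 := by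
          rw [putB_apply, max_eq_left ((hPs hω).2 i.succ), max_eq_right (by linarith)]
          simp
        have h2 := Finset.single_le_sum (fun i (_ : i ∈ Finset.univ) => hterm i)
          (Finset.mem_univ i)
        rw [h1] at h2
        linarith [cut_nonneg n k ω]
    refine le_trans (le_of_eq ?_) hle
    rw [map_sub, map_sum, hL1]
    congr 1
    refine Finset.sum_congr rfl fun i _ => ?_
    rw [map_sub, map_smul, hL1, L_put hL hL1 hPs i hR.le, smul_eq_mul]
    ring
  · refine Eventually.of_forall fun k => ?_
    rw [← hL1]
    exact L_mono hL fun ω _ => cut_le_one n k ω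

lemma L_clip {L : (Path n →ᵇ ℝ) →ₗ[ℝ] ℝ} (hL : ∀ f, Hg p P 0 (fun ω => - f ω) → 0 ≤ L f)
    (hPs : P ⊆ Omega n s₀) (j : Fin n) (Δ : (Fin j → ℝ) →ᵇ ℝ≥0) (M : ℝ) (C : ℝ)
    (hC : ∀ x, (Δ x : ℝ) ≤ C) (hM : 0 ≤ M) : L (clipGain j Δ M C hC hM) ≤ 0 := by
  have hm : Measurable fun r : Fin j → ℝ => (Δ r : ℝ) * (if prevS s₀ j r < M then 1 else 0) := by
    refine Measurable.mul ?_ ?_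
    · exact (NNReal.continuous_coe.comp Δ.continuous).measurable
    · exact Measurable.ite (measurableSet_lt (prevS_measurable s₀ j) measurable_const)
        measurable_const measurable_const
  have h0 : ∀ r : Fin j → ℝ, 0 ≤ (Δ r : ℝ) * (if prevS s₀ j r < M then 1 else 0) := by
    intro r
    refine mul_nonneg (Δ r).2 ?_
    split_ifs <;> norm_num
  have hb : ∃ C, ∀ r : Fin j → ℝ, |(Δ r : ℝ) * (if prevS s₀ j r < M then 1 else 0)| ≤ C := by
    refine ⟨C, fun r => ?_⟩
    rw [abs_of_nonneg (h0 r)]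
    have h1 := hC r
    have h2 : (0 : ℝ) ≤ Δ r := (Δ r).2
    split_ifs <;> linarith
  have := hL (-clipGain j Δ M C hC hM) ⟨Static.cash 0, Dyn.single j _ hm hb,
    Dyn.single_nonneg j _ hm hb h0, Static.cash_price _ _, fun ω hω => ?_⟩
  · rw [map_neg] at this
    linarith
  · rw [Static.cash_putPayoff, Dyn.single_gains, prevS_restr s₀ j ω (hPs hω).1, zero_add]
    have h1 : - (-clipGain j Δ M C hC hM) ω = (Δ (restr j ω) : ℝ) *
        (clip M (ω j.succ) - clip M (ω j.castSucc)) := neg_neg _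
    beta_reduce
    rw [h1, mul_assoc]
    exact mul_le_mul_of_nonneg_left (clip_diff ((hPs hω).2 _) ((hPs hω).2 _)) (Δ _).2

theorem exists_MSetP {L : (Path n →ᵇ ℝ) →ₗ[ℝ] ℝ}
    (hL : ∀ f, Hg p P 0 (fun ω => - f ω) → 0 ≤ L f) (hL1 : L 1 = 1)
    (hPs : P ⊆ Omega n s₀) (hPc : IsClosed P) (hPn : P.Nonempty) (hμ : PutPricesFrom p μ) :
    ∃ Q ∈ MSetP s₀ μ P, ∀ f : Path n →ᵇ ℝ, ∫ ω, f ω ∂Q = L f := by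
  obtain ⟨Q, hQp, hQ⟩ := exists_measure L
    (fun f hf => by simpa using L_mono hL (f := 0) (g := f) fun ω _ => hf ω) hL1 (cut n)
    (cut_compact n) (cut_nonneg n) (cut_le_one n) (cut_tendsto n) (L_cut hL hL1 hPs hμ)
  refine ⟨Q, ?_, hQ⟩
  have hPae : ∀ᵐ ω ∂Q, ω ∈ P := by
    let f : Path n →ᵇ ℝ := BoundedContinuousFunction.ofNormedAddCommGroup
      (fun ω : Path n => min (Metric.infDist ω P) 1)
      ((Metric.continuous_infDist_pt P).min continuous_const) 1 (by
        intro ω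
        rw [Real.norm_eq_abs, abs_of_nonneg (le_min Metric.infDist_nonneg zero_le_one)]
        exact min_le_right _ _)
    have hf : ∀ ω, f ω = min (Metric.infDist ω P) 1 := fun ω => rfl
    have hf0 : ∫ ω, f ω ∂Q = 0 := by
      rw [hQ]
      have hz : ∀ ω ∈ P, f ω = 0 := fun ω hω => by
        rw [hf, Metric.infDist_zero_of_mem hω]; simp
      refine le_antisymm ?_ ?_
      · simpa using L_mono hL (f := f) (g := 0) fun ω hω => (hz ω hω).le
      · simpa using L_mono hL (f := 0) (g := f) fun ω hω => (hz ω hω).ge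
    rw [integral_eq_zero_iff_of_nonneg (f := fun ω => f ω)
      (fun ω => le_min Metric.infDist_nonneg zero_le_one) (f.integrable Q)] at hf0
    filter_upwards [hf0] with ω hω
    rw [hPc.mem_iff_infDist_zero hPn]
    have h1 : min (Metric.infDist ω P) 1 = 0 := hω
    have h2 : 0 ≤ Metric.infDist ω P := Metric.infDist_nonneg
    rcases min_choice (Metric.infDist ω P) 1 with h | h
    · rw [← h, h1]
    · rw [h] at h1; norm_num at h1
  have hP1 : Q P = 1 := (prob_compl_eq_zero_iff hPc.measurableSet).1 hPae
  have hOae : ∀ᵐ ω ∂Q, ω ∈ Omega n s₀ := hPae.mono fun ω h => hPs h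
  have hO1 : Q (Omega n s₀) = 1 := (prob_compl_eq_zero_iff (measurableSet_Omega n s₀)).1 hOae
  have hmarg : ∀ i : Fin n, Q.map (fun ω => ω i.succ) = μ i := by
    intro i
    have hmi : AEMeasurable (fun ω : Path n => ω i.succ) Q := (measurable_pi_apply _).aemeasurable
    have : IsProbabilityMeasure (Q.map (fun ω => ω i.succ)) :=
      Measure.isProbabilityMeasure_map hmi
    have := hμ.1 i
    refine puts_determine _ _ ?_ (hμ.2.1 i) fun K hK => ?_
    · rw [Measure.map_apply_of_aemeasurable hmi measurableSet_Iio]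
      have : ∀ᵐ ω ∂Q, ¬ (ω i.succ < 0) := hOae.mono fun ω h => not_lt.2 (h.2 _)
      rw [ae_iff] at this
      simp only [not_not] at this
      exact this
    · rw [← hμ.2.2.2 i K hK, ← L_put hL hL1 hPs i hK, ← hQ, integral_map hmi (by fun_prop)]
      refine integral_congr_ae ?_
      filter_upwards [hOae] with ω hω
      rw [putB_apply, max_eq_left (hω.2 _)]
  have hPi : Q ∈ PiMu s₀ μ := ⟨hQp, hO1, hmarg⟩
  refine ⟨⟨hPi, ?_⟩, hP1⟩
  have hIntg := coord_integrable hμ.2.2.1 hPi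
  have h0 : ∀ᵐ ω ∂Q, ∀ i, 0 ≤ ω i := hOae.mono fun ω h => h.2
  rw [supermart_wlaw hIntg h0]
  intro j
  have := wlaw_finite (r := restr j) (hIntg j.succ)
  have := wlaw_finite (r := restr j) (hIntg j.castSucc)
  refine measure_le_of_bcf _ _ fun Δ => ?_
  obtain ⟨C, hC⟩ : ∃ C : ℝ, ∀ x, (Δ x : ℝ) ≤ C := by
    refine ⟨nndist Δ 0, fun x => ?_⟩
    have := Δ.dist_coe_le_dist (g := 0) x
    rw [NNReal.dist_eq] at this
    simpa using this
  have hmΔ : Measurable fun r : Fin j → ℝ => (Δ r : ℝ) :=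
    (NNReal.continuous_coe.comp Δ.continuous).measurable
  have hCabs : ∀ x, |(Δ x : ℝ)| ≤ C := fun x => by
    rw [abs_of_nonneg (NNReal.coe_nonneg (Δ x))]; exact hC x
  have hbr := wlaw_bridge (measurable_restr j) (measurable_pi_apply j.succ) (hIntg _)
      (h0.mono fun ω h => h _) (measurable_pi_apply j.castSucc) (hIntg _)
      (h0.mono fun ω h => h _) hmΔ hCabs (fun x => (Δ x).2)
  simp only [ENNReal.ofReal_coe_nnreal] at hbr
  refine hbr.1 ?_
  have hlim : Tendsto (fun k : ℕ => ∫ ω, (Δ (restr j ω) : ℝ) *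
      (clip (k : ℝ) (ω j.succ) - clip (k : ℝ) (ω j.castSucc)) ∂Q) atTop
      (𝓝 (∫ ω, (Δ (restr j ω) : ℝ) * (ω j.succ - ω j.castSucc) ∂Q)) := by
    refine tendsto_integral_of_dominated_convergence
      (fun ω => C * (|ω j.succ| + |ω j.castSucc|)) ?_ ?_ ?_ ?_
    · intro k
      exact (clipGain j Δ k C hC k.cast_nonneg).continuous.aestronglyMeasurable
    · exact ((hIntg _).abs.add (hIntg _).abs).const_mul C
    · intro k
      refine Eventually.of_forall fun ω => ?_
      rw [Real.norm_eq_abs, abs_mul]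
      have h1 := clip_abs_le (k.cast_nonneg (α := ℝ)) (ω j.succ)
      have h2 := clip_abs_le (k.cast_nonneg (α := ℝ)) (ω j.castSucc)
      have h3 := abs_sub (clip k (ω j.succ)) (clip k (ω j.castSucc))
      exact mul_le_mul (hCabs _) (by linarith) (abs_nonneg _) ((abs_nonneg _).trans (hCabs 0))
    · filter_upwards [h0] with ω hω
      exact ((clip_tendsto (hω _)).sub (clip_tendsto (hω _))).const_mul _
  refine le_of_tendsto' hlim fun k => ?_
  have := L_clip hL hPs j Δ k C hC k.cast_nonneg
  rw [← hQ] at this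
  exact this

end


/-! ### Lipschitz approximation of upper semicontinuous claims -/

lemma posE_eq : posE = EReal.toENNReal := by
  funext x
  simp only [posE, EReal.toENNReal]

section
variable {n : ℕ} {P : Set (Path n)} {H : Path n → EReal} {C : ℝ}

/-- Truncation from below. -/
def truncH (H : Path n → EReal) (k : ℕ) (y : Path n) : ℝ := (max (H y) ((-(k : ℝ) : ℝ) : EReal)).toReal

lemma truncH_coe (hC : ∀ ω ∈ P, H ω ≤ (C : EReal)) (k : ℕ) {y : Path n}
    (hy : y ∈ P) : ((truncH H k y : ℝ) : EReal) = max (H y) ((-(k : ℝ) : ℝ) : EReal) := by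
  unfold truncH
  refine EReal.coe_toReal ?_ ?_
  · refine ne_of_lt (max_lt ?_ (EReal.coe_lt_top _))
    exact (hC y hy).trans_lt (EReal.coe_lt_top _)
  · exact ne_of_gt (lt_of_lt_of_le (EReal.bot_lt_coe _) (le_max_right _ _))

lemma truncH_le_iff (hC : ∀ ω ∈ P, H ω ≤ (C : EReal)) (k : ℕ) {y : Path n}
    (hy : y ∈ P) (a : ℝ) : truncH H k y ≤ a ↔ H y ≤ (a : EReal) ∧ -(k : ℝ) ≤ a := by
  rw [← EReal.coe_le_coe_iff, truncH_coe hC k hy, max_le_iff, EReal.coe_le_coe_iff]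

lemma truncH_anti (hC : ∀ ω ∈ P, H ω ≤ (C : EReal)) {k l : ℕ} (hkl : k ≤ l) {y : Path n}
    (hy : y ∈ P) : truncH H l y ≤ truncH H k y := by
  have hkl' : (k : ℝ) ≤ l := by exact_mod_cast hkl
  have h := (truncH_le_iff hC k hy _).1 le_rfl
  exact (truncH_le_iff hC l hy _).2 ⟨h.1, by linarith [h.2]⟩

/-- The sup-convolution. -/
def gfun (P : Set (Path n)) (H : Path n → EReal) (k : ℕ) (ω : Path n) : ℝ :=
  ⨆ y : P, max (truncH H k y - (k : ℝ) * dist ω y) (-(k : ℝ))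

lemma gterm_le (hC : ∀ ω ∈ P, H ω ≤ (C : EReal)) (hC0 : 0 ≤ C) (k : ℕ) (ω : Path n) (y : P) :
    max (truncH H k y - (k : ℝ) * dist ω y) (-(k : ℝ)) ≤ C := by
  have hk : (0 : ℝ) ≤ k := k.cast_nonneg
  have h1 : truncH H k y ≤ C := (truncH_le_iff hC k y.2 C).2 ⟨hC y y.2, by linarith⟩
  have h2 : 0 ≤ (k : ℝ) * dist ω y := mul_nonneg hk dist_nonneg
  exact max_le (by linarith) (by linarith)

lemma gbdd (hC : ∀ ω ∈ P, H ω ≤ (C : EReal)) (hC0 : 0 ≤ C) (k : ℕ) (ω : Path n) :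
    BddAbove (range fun y : P => max (truncH H k y - (k : ℝ) * dist ω y) (-(k : ℝ))) :=
  ⟨C, by rintro _ ⟨y, rfl⟩; exact gterm_le hC hC0 k ω y⟩

lemma gfun_le (hC : ∀ ω ∈ P, H ω ≤ (C : EReal)) (hC0 : 0 ≤ C) (hPn : P.Nonempty) (k : ℕ)
    (ω : Path n) : gfun P H k ω ≤ C := by
  have := hPn.to_subtype
  exact ciSup_le fun y => gterm_le hC hC0 k ω y

lemma le_gfun (hC : ∀ ω ∈ P, H ω ≤ (C : EReal)) (hC0 : 0 ≤ C) (hPn : P.Nonempty) (k : ℕ)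
    (ω : Path n) : -(k : ℝ) ≤ gfun P H k ω := by
  obtain ⟨y, hy⟩ := hPn
  exact (le_max_right _ _).trans (le_ciSup (gbdd hC hC0 k ω) ⟨y, hy⟩)

lemma gfun_lip (hC : ∀ ω ∈ P, H ω ≤ (C : EReal)) (hC0 : 0 ≤ C) (hPn : P.Nonempty) (k : ℕ) :
    LipschitzWith (k : ℝ≥0) (gfun P H k) := by
  have := hPn.to_subtype
  refine LipschitzWith.of_le_add_mul _ fun ω ω' => ?_
  refine ciSup_le fun y => ?_
  have h1 := le_ciSup (gbdd hC hC0 k ω') y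
  have h2 : dist ω' y ≤ dist ω' ω + dist ω y := dist_triangle _ _ _
  have hk : (0 : ℝ) ≤ k := k.cast_nonneg
  have h3 := mul_le_mul_of_nonneg_left h2 hk
  rw [dist_comm ω' ω] at h3
  have h4 : 0 ≤ (k : ℝ) * dist ω ω' := mul_nonneg hk dist_nonneg
  change _ ≤ gfun P H k ω' + ((k : ℝ≥0) : ℝ) * dist ω ω'
  change _ ≤ gfun P H k ω' at h1
  have h5 := (le_max_left _ _).trans h1
  have h6 := (le_max_right _ _).trans h1
  rw [NNReal.coe_natCast]
  exact max_le (by linarith) (by linarith)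

lemma gfun_anti (hC : ∀ ω ∈ P, H ω ≤ (C : EReal)) (hC0 : 0 ≤ C) (hPn : P.Nonempty) {k l : ℕ}
    (hkl : k ≤ l) (ω : Path n) : gfun P H l ω ≤ gfun P H k ω := by
  refine ciSup_mono (gbdd hC hC0 k ω) fun y => ?_
  have hkl' : (k : ℝ) ≤ l := by exact_mod_cast hkl
  have h1 := truncH_anti hC hkl y.2
  have h2 := mul_le_mul_of_nonneg_right hkl' (dist_nonneg (x := ω) (y := (y : Path n)))
  exact max_le_max (by linarith) (by linarith)

lemma H_le_gfun (hC : ∀ ω ∈ P, H ω ≤ (C : EReal)) (hC0 : 0 ≤ C) (k : ℕ) {ω : Path n}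
    (hω : ω ∈ P) : H ω ≤ (gfun P H k ω : EReal) := by
  have h1 := le_ciSup (gbdd hC hC0 k ω) ⟨ω, hω⟩
  have h2 := (le_max_left _ _).trans h1
  simp only [dist_self, mul_zero, sub_zero] at h2
  exact ((truncH_le_iff hC k hω _).1 h2).1

lemma gfun_tendsto (hC : ∀ ω ∈ P, H ω ≤ (C : EReal)) (hC0 : 0 ≤ C)
    (hH : UpperSemicontinuousOn H P) {ω : Path n} (hω : ω ∈ P) :
    Tendsto (fun k => (gfun P H k ω : EReal)) atTop (𝓝 (H ω)) := by
  have hPn : Nonempty P := ⟨⟨ω, hω⟩⟩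
  refine tendsto_order.2 ⟨fun a ha => Eventually.of_forall fun k =>
    ha.trans_le (H_le_gfun hC hC0 k hω), fun b hb => ?_⟩
  obtain ⟨a, ha1, ha2⟩ := EReal.lt_iff_exists_real_btwn.1 hb
  have hu := hH ω hω a ha1
  rw [eventually_nhdsWithin_iff, Metric.eventually_nhds_iff] at hu
  obtain ⟨δ, hδ, hu⟩ := hu
  obtain ⟨N, hN⟩ := exists_nat_ge (max (-a) ((C - a) / δ))
  filter_upwards [eventually_ge_atTop N] with k hk
  refine lt_of_le_of_lt ?_ ha2
  rw [EReal.coe_le_coe_iff]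
  have hk' : (N : ℝ) ≤ k := by exact_mod_cast hk
  have h1 : -a ≤ k := ((le_max_left _ _).trans hN).trans hk'
  have h2 : (C - a) / δ ≤ k := ((le_max_right _ _).trans hN).trans hk'
  rw [div_le_iff₀ hδ] at h2
  have hk0 : (0 : ℝ) ≤ k := k.cast_nonneg
  refine ciSup_le fun y => max_le ?_ (by linarith)
  by_cases hd : dist (y : Path n) ω < δ
  · have h3 := hu hd y.2
    have h4 := (truncH_le_iff hC k y.2 a).2 ⟨h3.le, by linarith⟩
    have h5 : 0 ≤ (k : ℝ) * dist ω y := mul_nonneg hk0 dist_nonneg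
    linarith
  · have h4 := (truncH_le_iff hC k y.2 C).2 ⟨hC y y.2, by linarith⟩
    rw [not_lt, dist_comm] at hd
    have h5 := mul_le_mul_of_nonneg_left hd hk0
    linarith

/-- The sup-convolution as a bounded continuous function. -/
def gB (hC : ∀ ω ∈ P, H ω ≤ (C : EReal)) (hC0 : 0 ≤ C) (hPn : P.Nonempty) (k : ℕ) :
    Path n →ᵇ ℝ :=
  BoundedContinuousFunction.ofNormedAddCommGroup (gfun P H k)
    (gfun_lip hC hC0 hPn k).continuous (C + k) (by
      intro ω
      have h1 := gfun_le hC hC0 hPn k ω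
      have h2 := le_gfun hC hC0 hPn k ω
      have hk0 : (0 : ℝ) ≤ k := k.cast_nonneg
      rw [Real.norm_eq_abs, abs_le]
      constructor <;> linarith)

theorem le_eexpE (hC : ∀ ω ∈ P, H ω ≤ (C : EReal)) (hC0 : 0 ≤ C) (hPn : P.Nonempty)
    (hH : UpperSemicontinuousOn H P) (Q : Measure (Path n)) [IsProbabilityMeasure Q]
    (hP : ∀ᵐ ω ∂Q, ω ∈ P) (c : ℝ) (hc : ∀ k, c ≤ ∫ ω, gB hC hC0 hPn k ω ∂Q) :
    (c : EReal) ≤ eexpE Q H := by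
  have hmeas : ∀ k, Measurable (gfun P H k) := fun k =>
    (gfun_lip hC hC0 hPn k).continuous.measurable
  have hA : Tendsto (fun k => ∫⁻ ω, ENNReal.ofReal (gfun P H k ω) ∂Q) atTop
      (𝓝 (∫⁻ ω, posE (H ω) ∂Q)) := by
    refine tendsto_lintegral_of_dominated_convergence (fun _ => ENNReal.ofReal C)
      (fun k => (hmeas k).ennreal_ofReal) (fun k => Eventually.of_forall fun ω =>
        ENNReal.ofReal_le_ofReal (gfun_le hC hC0 hPn k ω)) (by simp) ?_
    filter_upwards [hP] with ω hω
    have := (EReal.continuous_toENNReal.tendsto _).comp (gfun_tendsto hC hC0 hH hω)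
    rw [← posE_eq] at this
    refine this.congr fun k => posE_coe _
  have hB : Tendsto (fun k => ∫⁻ ω, ENNReal.ofReal (-(gfun P H k ω)) ∂Q) atTop
      (𝓝 (∫⁻ ω, posE (-(H ω)) ∂Q)) := by
    refine lintegral_tendsto_of_tendsto_of_monotone
      (fun k => (hmeas k).neg.ennreal_ofReal.aemeasurable) (Eventually.of_forall fun ω k l hkl =>
        ENNReal.ofReal_le_ofReal (neg_le_neg (gfun_anti hC hC0 hPn hkl ω))) ?_
    filter_upwards [hP] with ω hω
    have h1 : Tendsto (fun k => -(gfun P H k ω : EReal)) atTop (𝓝 (-(H ω))) :=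
      (continuous_neg.tendsto _).comp (gfun_tendsto hC hC0 hH hω)
    have := (EReal.continuous_toENNReal.tendsto _).comp h1
    rw [← posE_eq] at this
    refine this.congr fun k => ?_
    rw [Function.comp, ← EReal.coe_neg, posE_coe]
  have hAfin : ∫⁻ ω, posE (H ω) ∂Q ≠ ⊤ := by
    refine ne_of_lt (lt_of_le_of_lt (b := ENNReal.ofReal C) ?_ ENNReal.ofReal_lt_top)
    refine le_of_tendsto' hA fun k => ?_
    calc ∫⁻ ω, ENNReal.ofReal (gfun P H k ω) ∂Q ≤ ∫⁻ _, ENNReal.ofReal C ∂Q :=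
          lintegral_mono fun ω => ENNReal.ofReal_le_ofReal (gfun_le hC hC0 hPn k ω)
      _ = ENNReal.ofReal C := by simp
  have hA' := (continuous_coe_ennreal_ereal.tendsto _).comp hA
  have hB' := (continuous_neg.tendsto _).comp ((continuous_coe_ennreal_ereal.tendsto _).comp hB)
  have hAB := (EReal.continuousAt_add
    (p := (((∫⁻ ω, posE (H ω) ∂Q : ℝ≥0∞) : EReal), -((∫⁻ ω, posE (-(H ω)) ∂Q : ℝ≥0∞) : EReal)))
    (Or.inl (by simpa using hAfin)) (Or.inl (by simp))).tendsto.comp (hA'.prodMk_nhds hB')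
  refine ge_of_tendsto' hAB fun k => ?_
  have h1 : (c : EReal) ≤ ((∫ ω, gB hC hC0 hPn k ω ∂Q : ℝ) : EReal) := by exact_mod_cast hc k
  rw [← eexp_of_integrable ((gB hC hC0 hPn k).integrable Q)] at h1
  exact h1

end


/-- Theorem 4.3, pricing–hedging duality with traded puts for
claims bounded from above: if the market input admits no WFLVR and `μ_i` are the
measures defined from the put prices, then for upper semi-continuous `G` bounded
from above, the primal value over `M⁻_{μ,𝔓}`, the supremum over market calibrated
models, and the put-based superhedging price all coincide. -/
theorem duality_puts_bounded
    {n : ℕ} (hn : 1 ≤ n) {s₀ : ℝ} (hs₀ : 0 < s₀)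
    (P : Set (Path n)) (hPsub : P ⊆ Omega n s₀) (hPclosed : IsClosed P)
    (p : Fin n → ℝ → ℝ) (μ : Fin n → Measure ℝ) (hμ : PutPricesFrom p μ)
    (hNA : ¬ WFLVR Static.putPayoff p P)
    (G : (Fin n → ℝ) → EReal) (hGtop : ∀ s, G s ≠ ⊤)
    (hGusc : UpperSemicontinuousOn G {s | ∀ i, 0 ≤ s i})
    (hGbdd : ∃ C : ℝ, ∀ s : Fin n → ℝ, (∀ i, 0 ≤ s i) → G s ≤ (C : EReal)) :
    (⨆ Q ∈ MSetP s₀ μ P, eexpE Q (fun ω => G (tailCoords ω))) =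
      (⨆ Q ∈ {Q : Measure (Path n) | Calibrated Static.putPayoff p P Q},
        eexpE Q (fun ω => G (tailCoords ω))) ∧
    (⨆ Q ∈ {Q : Measure (Path n) | Calibrated Static.putPayoff p P Q},
        eexpE Q (fun ω => G (tailCoords ω))) =
      V Static.putPayoff p P (fun ω => G (tailCoords ω)) := by
  set H : Path n → EReal := fun ω => G (tailCoords ω) with hHdef
  obtain ⟨C₀, hC₀⟩ := hGbdd
  have hC : ∀ ω ∈ P, H ω ≤ ((max C₀ 0 : ℝ) : EReal) := fun ω hω =>
    (hC₀ _ fun i => (hPsub hω).2 _).trans (by exact_mod_cast le_max_left _ _)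
  have hC0 : 0 ≤ max C₀ 0 := le_max_right _ _
  have hcont : Continuous (tailCoords : Path n → (Fin n → ℝ)) := by
    unfold tailCoords
    fun_prop
  have hH : UpperSemicontinuousOn H P := by
    intro ω hω a ha
    have h1 := hGusc (tailCoords ω) (fun i => (hPsub hω).2 _) a ha
    have h2 : Tendsto (tailCoords : Path n → (Fin n → ℝ)) (𝓝[P] ω)
        (𝓝[{s | ∀ i, 0 ≤ s i}] (tailCoords ω)) :=
      hcont.continuousWithinAt.tendsto_nhdsWithin fun y hy i => (hPsub hy).2 _
    exact h2.eventually h1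
  have hle1 : (⨆ Q ∈ MSetP s₀ μ P, eexpE Q H) ≤
      ⨆ Q ∈ {Q : Measure (Path n) | Calibrated Static.putPayoff p P Q}, eexpE Q H :=
    biSup_mono fun Q hQ => calibrated_of_MSetP hμ hQ
  have hle2 : (⨆ Q ∈ {Q : Measure (Path n) | Calibrated Static.putPayoff p P Q}, eexpE Q H) ≤
      V Static.putPayoff p P H := iSup₂_le fun Q hQ => weak_duality hPclosed hQ H
  have hle3 : V Static.putPayoff p P H ≤ ⨆ Q ∈ MSetP s₀ μ P, eexpE Q H := by
    have hcash : ∀ a : ℝ, Hg p P a (fun _ => a) := fun a => by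
      simpa using (Hg.zero (p := p) (P := P)).affine le_rfl a
    rcases P.eq_empty_or_nonempty with hPe | hPn
    · have : V Static.putPayoff p P H = ⊥ := by
        rw [EReal.eq_bot_iff_forall_lt]
        intro y
        refine lt_of_le_of_lt ((hcash (y - 1)).V_le fun ω hω => ?_)
          (EReal.coe_lt_coe_iff.2 (sub_one_lt y))
        rw [hPe] at hω
        exact absurd hω (notMem_empty ω)
      rw [this]
      exact bot_le
    · have hVC : V Static.putPayoff p P H ≤ ((max C₀ 0 : ℝ) : EReal) := (hcash _).V_le hC
      obtain ⟨v, hv⟩ : ∃ v, v = V Static.putPayoff p P H := ⟨_, rfl⟩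
      rw [← hv] at hVC ⊢
      induction v using EReal.rec with
      | bot => exact bot_le
      | top => exact absurd hVC (by simp)
      | coe c =>
        obtain ⟨L, hL1, hLg, hL⟩ := exists_functional (p := p) (P := P) c (gB hC hC0 hPn)
          (fun k l hkl ω => gfun_anti hC hC0 hPn hkl ω) H
          (fun k ω hω => H_le_gfun hC hC0 k hω) hv.le
        obtain ⟨Q, hQ, hQL⟩ := exists_MSetP hL hL1 hPsub hPclosed hPn hμ
        have := hQ.1.1.1
        refine le_trans ?_ (le_iSup₂_of_le Q hQ le_rfl)
        exact le_eexpE hC hC0 hPn hH Q (ae_of_measure_one hPclosed.measurableSet hQ.2) c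
          fun k => (hLg k).trans_eq (hQL _).symm
  exact ⟨le_antisymm hle1 (hle2.trans hle3), le_antisymm hle2 (hle3.trans hle1)⟩

end RobustFin
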